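/- arXiv:2410.14962 — 3 statements merged into one kernel-verified Lean document; each statement's English description precedes it below -/
import Mathlib

section
/- Let C be a pointed closed convex cone in ℝⁿ with nonempty interior and let E be a C-pseudo-cone. For every r ∈ (−∞, 0) ∪ (0, 1), the dual volume integral ∫_{Ω_C^e} ρ_E(u)^r dH^{n−1}(u) is finite, where Ω_C^e = {u ∈ S^{n−1} ∩ C : ∃ s > 0, su ∈ E}, ρ_E(u) = inf{s > 0 : su ∈ E}, and the integral is with respect to (n−1)-dimensional Hausdorff measure on the unit sphere. -/
/-! The case `r < 0` is immediate once the spherical set `sphere 0 1 ∩ C` is known to have finite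
`(n-1)`-dimensional measure, because `radialFn E` is bounded below by the distance from `0` to `E`.

For `0 < r < 1`, choose a linear functional `f` that is strictly positive on `C \ {0}` (such `f`
exists because `C` is pointed) and let `K = C ∩ {f = 1}`, a compact convex subset of a hyperplane.
Normalization `x ↦ x / ‖x‖` is Lipschitz on `K` and maps it onto `sphere 0 1 ∩ C`, so measure bounds
can be proved on `K`. Fix `p ∈ E` and let `x₀ = p / f p ∈ K`. If `x` lies in the homothetic copy
`(1 - t) K + t x₀` of `K`, then `x - (t / f p) p ∈ C`, and `p + C ⊆ E` gives
`radialFn E (x / ‖x‖) ≤ T / t` for a constant `T`. The rest of `K` has measure at most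
`(1 - (1 - t) ^ (n - 1)) μ(K) ≤ (n - 1) t μ(K)` by Bernoulli's inequality. Hence `radialFn E`
satisfies a weak-type `L¹` bound, and its `r`-th power is integrable by a dyadic decomposition.
No regularity of the boundary of `C`, nor the measurability of `radialFn E`, is needed. -/

open Set MeasureTheory Metric Bornology
open scoped InnerProductSpace ENNReal NNReal Pointwise

noncomputable section

/-- A pointed closed convex cone with nonempty interior in `ℝⁿ`. -/
def IsPointedClosedConvexCone {n : ℕ} (C : Set (EuclideanSpace ℝ (Fin n))) : Prop :=
  IsClosed C ∧ Convex ℝ C ∧ (interior C).Nonempty ∧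
    (∀ l : ℝ, 0 ≤ l → ∀ x ∈ C, l • x ∈ C) ∧ C ∩ (-C) = {0}

/-- The recession cone of a set. -/
def recCone {n : ℕ} (E : Set (EuclideanSpace ℝ (Fin n))) : Set (EuclideanSpace ℝ (Fin n)) :=
  {x | ∀ y ∈ E, y + x ∈ E}

/-- A pseudo-cone: a nonempty closed convex set not containing the origin, closed under
dilations by factors `≥ 1`. -/
def IsPseudoCone {n : ℕ} (E : Set (EuclideanSpace ℝ (Fin n))) : Prop :=
  E.Nonempty ∧ IsClosed E ∧ Convex ℝ E ∧ (0 : EuclideanSpace ℝ (Fin n)) ∉ E ∧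
    ∀ l : ℝ, 1 ≤ l → ∀ x ∈ E, l • x ∈ E

/-- A `C`-pseudo-cone: a pseudo-cone contained in `C` with recession cone `C`. -/
def IsCPseudoCone {n : ℕ} (C E : Set (EuclideanSpace ℝ (Fin n))) : Prop :=
  IsPseudoCone E ∧ E ⊆ C ∧ recCone E = C

/-- The polar cone of `C`. -/
def polarCone {n : ℕ} (C : Set (EuclideanSpace ℝ (Fin n))) : Set (EuclideanSpace ℝ (Fin n)) :=
  {y | ∀ x ∈ C, ⟪x, y⟫_ℝ ≤ 0}

/-- The support function of a set. -/
def suppFn {n : ℕ} (E : Set (EuclideanSpace ℝ (Fin n))) (v : EuclideanSpace ℝ (Fin n)) : ℝ :=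
  sSup ((fun x => ⟪x, v⟫_ℝ) '' E)

/-- A `C`-asymptotic set: an unbounded closed convex subset of `C` avoiding the origin whose
boundary is asymptotic to the boundary of `C` at infinity. -/
def IsCAsymptotic {n : ℕ} (C A : Set (EuclideanSpace ℝ (Fin n))) : Prop :=
  A ⊆ C ∧ (0 : EuclideanSpace ℝ (Fin n)) ∉ A ∧ IsClosed A ∧ Convex ℝ A ∧
    ¬ IsBounded A ∧
    ∀ ε > 0, ∃ R > 0, ∀ x ∈ frontier A, R ≤ ‖x‖ → infDist x (frontier C) < ε

/-- The radial function of a set. -/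
def radialFn {n : ℕ} (E : Set (EuclideanSpace ℝ (Fin n))) (u : EuclideanSpace ℝ (Fin n)) : ℝ :=
  sInf {r : ℝ | 0 < r ∧ r • u ∈ E}

/-- A pointed closed convex cone has a linear functional bounded below by a positive constant on
its unit vectors. Separating `-u` from `C` gives a functional nonnegative on `C` and positive at `u`;
compactness of the unit vectors of `C` lets finitely many of these be added up. -/
lemma exists_pos_functional {n : ℕ} {C : Set (EuclideanSpace ℝ (Fin n))}
    (hC : IsPointedClosedConvexCone C) :
    ∃ (f : EuclideanSpace ℝ (Fin n) →L[ℝ] ℝ) (c : ℝ), 0 < c ∧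
      ∀ x ∈ C, c * ‖x‖ ≤ f x := by
  obtain ⟨hcl, hconv, -, hcone, hpt⟩ := hC
  have h0 : (0 : EuclideanSpace ℝ (Fin n)) ∈ C := by
    have : (0 : EuclideanSpace ℝ (Fin n)) ∈ C ∩ (-C) := by rw [hpt]; rfl
    exact this.1
  have hcomp : IsCompact (sphere (0 : EuclideanSpace ℝ (Fin n)) 1 ∩ C) :=
    (isCompact_sphere 0 1).inter_right hcl
  have key : ∃ f : EuclideanSpace ℝ (Fin n) →L[ℝ] ℝ, (∀ x ∈ C, 0 ≤ f x) ∧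
      ∀ x ∈ sphere (0 : EuclideanSpace ℝ (Fin n)) 1 ∩ C, x ∈ C → 0 < f x := by
    refine hcomp.induction_on (p := fun s => ∃ f : EuclideanSpace ℝ (Fin n) →L[ℝ] ℝ,
      (∀ x ∈ C, 0 ≤ f x) ∧ ∀ x ∈ s, x ∈ C → 0 < f x) ?_ ?_ ?_ ?_
    · exact ⟨0, by simp, by simp⟩
    · rintro s t hst ⟨f, hf, hf'⟩
      exact ⟨f, hf, fun x hx => hf' x (hst hx)⟩
    · rintro s t ⟨f, hf, hf'⟩ ⟨g, hg, hg'⟩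
      refine ⟨f + g, fun x hx => add_nonneg (hf x hx) (hg x hx), ?_⟩
      rintro x (hx | hx) hxC
      · exact add_pos_of_pos_of_nonneg (hf' x hx hxC) (hg x hxC)
      · exact add_pos_of_nonneg_of_pos (hf x hxC) (hg' x hx hxC)
    · rintro u ⟨hu, huC⟩
      have hnu : -u ∉ C := by
        intro h
        have : u ∈ C ∩ (-C) := ⟨huC, by simpa using h⟩
        rw [hpt] at this
        have h1 : u = 0 := this
        simp [h1] at hu
      obtain ⟨f, v, hv, hf⟩ := geometric_hahn_banach_point_closed hconv hcl hnu
      have hv0 : v < 0 := by simpa using hf 0 h0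
      have hfC : ∀ x ∈ C, 0 ≤ f x := by
        intro x hx
        by_contra! hneg
        have h1 := hf ((v / f x) • x) (hcone _ (div_nonneg_of_nonpos hv0.le hneg.le) x hx)
        rw [map_smul, smul_eq_mul, div_mul_cancel₀ _ hneg.ne] at h1
        exact lt_irrefl _ h1
      have hfu : 0 < f u := by
        rw [map_neg] at hv
        linarith
      refine ⟨{x | 0 < f x}, mem_nhdsWithin_of_mem_nhds
        ((isOpen_lt continuous_const f.continuous).mem_nhds hfu), f, hfC, fun x hx _ => hx⟩
  obtain ⟨f, -, hfpos⟩ := key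
  obtain ⟨c, hc, hcf⟩ : ∃ c : ℝ, 0 < c ∧
      ∀ x ∈ sphere (0 : EuclideanSpace ℝ (Fin n)) 1 ∩ C, c ≤ f x := by
    rcases (sphere (0 : EuclideanSpace ℝ (Fin n)) 1 ∩ C).eq_empty_or_nonempty with he | hne
    · exact ⟨1, one_pos, by simp [he]⟩
    · obtain ⟨x, hx, hmin⟩ := hcomp.exists_isMinOn hne f.continuous.continuousOn
      exact ⟨f x, hfpos x hx hx.2, fun y hy => hmin hy⟩
  refine ⟨f, c, hc, fun x hx => ?_⟩
  rcases eq_or_ne x 0 with rfl | hx0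
  · simp
  have hn : 0 < ‖x‖ := norm_pos_iff.2 hx0
  have := hcf (‖x‖⁻¹ • x) ⟨by simp [norm_smul, hn.ne'], hcone _ (by positivity) x hx⟩
  rw [map_smul, smul_eq_mul, inv_mul_eq_div, le_div_iff₀ hn] at this
  exact this

/-- A bounded subset of a hyperplane is an isometric image of a bounded subset of the kernel, on
which the Hausdorff measure of the right dimension is a Haar measure. -/
lemma hausdorff_hyperplane_lt_top {n : ℕ}
    {f : EuclideanSpace ℝ (Fin n) →L[ℝ] ℝ} {K : Set (EuclideanSpace ℝ (Fin n))}
    (hK : IsBounded K) (hf : ∀ x ∈ K, f x = 1) : μH[(n : ℝ) - 1] K < ⊤ := by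
  rcases K.eq_empty_or_nonempty with rfl | ⟨x₀, hx₀⟩
  · simp
  let W : Submodule ℝ (EuclideanSpace ℝ (Fin n)) := LinearMap.ker f.toLinearMap
  have hfin : (Module.finrank ℝ W : ℝ) = (n : ℝ) - 1 := by
    have h1 : f.toLinearMap ≠ 0 := by
      intro h
      have h2 := hf x₀ hx₀
      have h3 : f x₀ = 0 := by
        change f.toLinearMap x₀ = 0
        rw [h]; rfl
      rw [h3] at h2
      exact zero_ne_one h2
    have h2 := Module.Dual.finrank_ker_add_one_of_ne_zero (f := f.toLinearMap) h1
    rw [finrank_euclideanSpace_fin] at h2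
    rw [eq_sub_iff_add_eq]
    exact_mod_cast h2
  have hiso : Isometry (fun w : W => x₀ + (w : EuclideanSpace ℝ (Fin n))) :=
    (IsometryEquiv.addLeft x₀).isometry.comp isometry_subtype_coe
  have hsub : K = (fun w : W => x₀ + (w : EuclideanSpace ℝ (Fin n))) ''
      ((fun w : W => x₀ + (w : EuclideanSpace ℝ (Fin n))) ⁻¹' K) := by
    rw [image_preimage_eq_inter_range, eq_comm, inter_eq_left]
    intro x hx
    refine ⟨⟨x - x₀, ?_⟩, by simp⟩
    change f (x - x₀) = 0
    rw [map_sub, hf x hx, hf x₀ hx₀, sub_self]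
  have hbd : IsBounded ((fun w : W => x₀ + (w : EuclideanSpace ℝ (Fin n))) ⁻¹' K) :=
    hiso.antilipschitz.isBounded_preimage hK
  rw [hsub, ← hfin, hiso.hausdorffMeasure_image (Or.inl (Nat.cast_nonneg _))]
  exact hbd.measure_lt_top

/-- Normalization is Lipschitz away from the origin. -/
lemma lipschitz_normalize {V : Type*} [NormedAddCommGroup V] [NormedSpace ℝ V] {K : Set V}
    {M : ℝ≥0} (hK : ∀ x ∈ K, 1 ≤ M * ‖x‖) :
    LipschitzOnWith (2 * M) (fun x : V => ‖x‖⁻¹ • x) K := by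
  refine LipschitzOnWith.of_dist_le_mul fun x hx y hy => ?_
  have pos : ∀ z ∈ K, 0 < ‖z‖ := fun z hz => by
    by_contra! h
    have h0 : ‖z‖ = 0 := le_antisymm h (norm_nonneg z)
    have := hK z hz
    rw [h0] at this
    norm_num at this
  have hxp := pos x hx
  have hyp := pos y hy
  have hinv : ‖x‖⁻¹ ≤ M := by
    rw [inv_le_iff_one_le_mul₀ hxp]; exact hK x hx
  have heq : ‖x‖⁻¹ • x - ‖y‖⁻¹ • y = ‖x‖⁻¹ • (x - y) + (‖x‖⁻¹ - ‖y‖⁻¹) • y := by module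
  have h2 : ‖(‖x‖⁻¹ - ‖y‖⁻¹) • y‖ ≤ ‖x‖⁻¹ * ‖x - y‖ := by
    have : (‖x‖⁻¹ - ‖y‖⁻¹) = ‖x‖⁻¹ * ‖y‖⁻¹ * (‖y‖ - ‖x‖) := by field_simp
    rw [norm_smul, this, norm_mul, norm_mul, norm_inv, norm_inv, norm_norm, norm_norm]
    calc ‖x‖⁻¹ * ‖y‖⁻¹ * ‖‖y‖ - ‖x‖‖ * ‖y‖ = ‖x‖⁻¹ * ‖‖y‖ - ‖x‖‖ := by field_simp
      _ ≤ ‖x‖⁻¹ * ‖x - y‖ := by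
        rw [norm_sub_rev x y]
        gcongr
        exact abs_norm_sub_norm_le y x
  rw [dist_eq_norm, dist_eq_norm, heq]
  calc _ ≤ ‖‖x‖⁻¹ • (x - y)‖ + ‖(‖x‖⁻¹ - ‖y‖⁻¹) • y‖ := norm_add_le _ _
    _ ≤ ‖x‖⁻¹ * ‖x - y‖ + ‖x‖⁻¹ * ‖x - y‖ := by
      gcongr
      rw [norm_smul, norm_inv, norm_norm]
    _ = 2 * ‖x‖⁻¹ * ‖x - y‖ := by ring
    _ ≤ _ := by push_cast; gcongr

/-- A compact convex set of finite `d`-dimensional measure loses at most the fraction `d * t` of its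
measure when shrunk by the factor `1 - t` towards one of its points. -/
lemma measure_diff_homothety_le {n : ℕ} {K : Set (EuclideanSpace ℝ (Fin n))} {d t : ℝ}
    (hK : IsCompact K) (hconv : Convex ℝ K) (hd : 1 ≤ d) (hfin : μH[d] K ≠ ⊤)
    {x₀ : EuclideanSpace ℝ (Fin n)} (hx₀ : x₀ ∈ K) (ht : 0 < t) (ht1 : t ≤ 1) :
    μH[d] (K \ (AffineMap.homothety x₀ (1 - t) '' K)) ≤ ENNReal.ofReal (d * t) * μH[d] K := by
  rcases ht1.eq_or_lt with rfl | ht1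
  · calc _ ≤ μH[d] K := measure_mono sdiff_subset
      _ = 1 * μH[d] K := (one_mul _).symm
      _ ≤ _ := by
        gcongr
        rw [ENNReal.one_le_ofReal]; linarith
  have hsub : AffineMap.homothety x₀ (1 - t) '' K ⊆ K := by
    rintro _ ⟨x, hx, rfl⟩
    rw [AffineMap.homothety_apply, vsub_eq_sub, vadd_eq_add]
    have := hconv hx hx₀ (sub_nonneg.2 ht1.le) ht.le (by ring)
    convert this using 1
    module
  have hmeas : MeasurableSet (AffineMap.homothety x₀ (1 - t) '' K) :=
    (hK.image (AffineMap.homothety_continuous x₀ (1 - t))).measurableSet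
  have h1t : 0 < 1 - t := by linarith
  have him : μH[d] (AffineMap.homothety x₀ (1 - t) '' K)
      = ENNReal.ofReal ((1 - t) ^ d) * μH[d] K := by
    rw [hausdorffMeasure_homothety_image (by linarith) x₀ h1t.ne', ENNReal.smul_def, smul_eq_mul]
    congr 1
    rw [← ENNReal.ofReal_coe_nnreal, NNReal.coe_rpow, coe_nnnorm, Real.norm_of_nonneg h1t.le]
  rw [measure_sdiff hsub hmeas.nullMeasurableSet (measure_ne_top_of_subset hsub hfin), him,
    tsub_le_iff_right, ← add_mul, ← ENNReal.ofReal_add (by positivity) (by positivity)]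
  have hB := one_add_mul_self_le_rpow_one_add (s := -t) (by linarith) hd
  calc μH[d] K = 1 * μH[d] K := (one_mul _).symm
    _ ≤ _ := by
      gcongr
      rw [ENNReal.one_le_ofReal]
      rw [← sub_eq_add_neg 1 t] at hB
      linarith

/-- A weak-type `L¹` bound makes powers with exponent in `(0, 1)` integrable. The function is not
assumed measurable; measurable hulls of the level sets provide a measurable majorant. -/
lemma lintegral_rpow_lt_top_of_weak {α : Type*} [MeasurableSpace α] {μ : Measure α}
    {g : α → ℝ} (hg : ∀ x, 0 ≤ g x) {T : ℝ} (hT : 0 < T) {D : ℝ≥0∞} (hD : D ≠ ⊤)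
    (hμ : μ univ ≠ ⊤)
    (h : ∀ k : ℕ, μ {x | T * 2 ^ k < g x} ≤ D * ENNReal.ofReal ((2 ^ k)⁻¹))
    {r : ℝ} (hr0 : 0 < r) (hr1 : r < 1) :
    ∫⁻ x, ENNReal.ofReal (g x ^ r) ∂μ < ⊤ := by
  let B : ℕ → Set α := fun k => toMeasurable μ {x | T * 2 ^ k < g x}
  let c : ℕ → ℝ≥0∞ := fun k => ENNReal.ofReal ((T * 2 ^ (k + 1)) ^ r)
  have hle : ∀ x, ENNReal.ofReal (g x ^ r) ≤
      ENNReal.ofReal (T ^ r) + ∑' k, (B k).indicator (fun _ => c k) x := by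
    intro x
    have hex : ∃ k : ℕ, g x ≤ T * 2 ^ k := by
      obtain ⟨k, hk⟩ := pow_unbounded_of_one_lt (g x / T) (one_lt_two)
      exact ⟨k, by rw [div_lt_iff₀ hT] at hk; linarith⟩
    -- The least dyadic level dominating `g x` selects the term of the series to use.
    classical
    rcases hk : Nat.find hex with _ | k
    · have h0 : g x ≤ T := by
        have := Nat.find_spec hex
        rw [hk] at this; simpa using this
      exact le_add_right (ENNReal.ofReal_le_ofReal (Real.rpow_le_rpow (hg x) h0 hr0.le))
    · have h1 : g x ≤ T * 2 ^ (k + 1) := by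
        have := Nat.find_spec hex
        rwa [hk] at this
      have h2 : T * 2 ^ k < g x := not_le.1 (Nat.find_min hex (by omega))
      have hxB : x ∈ B k := subset_toMeasurable _ _ h2
      refine le_add_left (le_trans ?_ (ENNReal.le_tsum k))
      rw [indicator_of_mem hxB]
      exact ENNReal.ofReal_le_ofReal (Real.rpow_le_rpow (hg x) h1 hr0.le)
  have hBm : ∀ k, MeasurableSet (B k) := fun k => measurableSet_toMeasurable _ _
  refine (lintegral_mono hle).trans_lt ?_
  rw [lintegral_add_left measurable_const, lintegral_const,
    lintegral_tsum fun k => (measurable_const.indicator (hBm k)).aemeasurable]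
  refine ENNReal.add_lt_top.2 ⟨ENNReal.mul_lt_top ENNReal.ofReal_lt_top hμ.lt_top, ?_⟩
  -- Each term is at most a geometric one, of ratio `2 ^ (r - 1) < 1`.
  have hterm : ∀ k, ∫⁻ x, (B k).indicator (fun _ => c k) x ∂μ ≤
      (D * ENNReal.ofReal ((T * 2) ^ r)) * ENNReal.ofReal (2 ^ (r - 1)) ^ k := by
    intro k
    rw [lintegral_indicator_const (hBm k), measure_toMeasurable]
    refine (mul_le_mul_right (h k) (c k)).trans (le_of_eq ?_)
    have : c k = ENNReal.ofReal ((T * 2) ^ r) * ENNReal.ofReal ((2 ^ k) ^ r) := by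
      rw [← ENNReal.ofReal_mul (by positivity), ← Real.mul_rpow (by positivity) (by positivity)]
      simp only [c]
      congr 2
      ring
    rw [this, ← ENNReal.ofReal_pow (by positivity)]
    have h3 : ((2 : ℝ) ^ (r - 1)) ^ k = (2 ^ k) ^ r * (2 ^ k)⁻¹ := by
      rw [Real.rpow_sub_one (by norm_num), div_pow, div_eq_mul_inv, ← Real.rpow_natCast_mul
        (by norm_num), ← Real.rpow_mul_natCast (by norm_num), mul_comm r]
    rw [h3, ENNReal.ofReal_mul (by positivity)]
    ring
  refine (ENNReal.tsum_le_tsum hterm).trans_lt ?_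
  rw [ENNReal.tsum_mul_left, ENNReal.tsum_geometric]
  refine ENNReal.mul_lt_top (ENNReal.mul_lt_top hD.lt_top ENNReal.ofReal_lt_top) ?_
  rw [ENNReal.inv_lt_top, tsub_pos_iff_lt, ENNReal.ofReal_lt_one]
  exact Real.rpow_lt_one_of_one_lt_of_neg one_lt_two (by linarith)

lemma radialFn_nonneg {n : ℕ} (E : Set (EuclideanSpace ℝ (Fin n)))
    (u : EuclideanSpace ℝ (Fin n)) : 0 ≤ radialFn E u :=
  Real.sInf_nonneg fun _ hs => hs.1.le

theorem stmt13 {n : ℕ} (hn : 2 ≤ n) (C E : Set (EuclideanSpace ℝ (Fin n)))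
    (hC : IsPointedClosedConvexCone C) (hE : IsCPseudoCone C E) :
    ∀ r : ℝ, (r < 0 ∨ (0 < r ∧ r < 1)) →
      ∫⁻ u in {u : EuclideanSpace ℝ (Fin n) |
          u ∈ sphere (0 : EuclideanSpace ℝ (Fin n)) 1 ∩ C ∧ ∃ s : ℝ, 0 < s ∧ s • u ∈ E},
        ENNReal.ofReal (radialFn E u ^ r) ∂(μH[(n : ℝ) - 1]) < ⊤ := by
  obtain ⟨f, c, hc, hfc⟩ := exists_pos_functional hC
  obtain ⟨hcl, hconv, -, hcone, -⟩ := hC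
  obtain ⟨⟨⟨p, hp⟩, hEcl, -, hE0, -⟩, hEC, hrec⟩ := hE
  set S : Set (EuclideanSpace ℝ (Fin n)) := sphere 0 1 ∩ C with hS
  have hSmeas : MeasurableSet S := isClosed_sphere.measurableSet.inter hcl.measurableSet
  set K : Set (EuclideanSpace ℝ (Fin n)) := C ∩ {x | f x = 1} with hKdef
  have hKbd : IsBounded K := by
    refine (isBounded_closedBall (x := (0 : EuclideanSpace ℝ (Fin n))) (r := c⁻¹)).subset ?_
    rintro x ⟨hx, hx1 : f x = 1⟩
    have := hfc x hx
    rw [hx1] at this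
    rw [mem_closedBall_zero_iff, inv_eq_one_div, le_div_iff₀ hc]
    linarith
  have hKcl : IsClosed K := hcl.inter (isClosed_eq f.continuous continuous_const)
  have hKcomp : IsCompact K := isCompact_of_isClosed_isBounded hKcl hKbd
  have hKconv : Convex ℝ K := hconv.inter
    (convex_hyperplane (f := f) f.toLinearMap.isLinear 1)
  have hd1 : (1 : ℝ) ≤ (n : ℝ) - 1 := by
    have : (2 : ℝ) ≤ n := by exact_mod_cast hn
    linarith
  have hd0 : (0 : ℝ) ≤ (n : ℝ) - 1 := by linarith
  have hKfin : μH[(n : ℝ) - 1] K ≠ ⊤ :=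
    (hausdorff_hyperplane_lt_top hKbd fun x hx => hx.2).ne
  have hlip : LipschitzOnWith (2 * ‖f‖₊)
      (fun x : EuclideanSpace ℝ (Fin n) => ‖x‖⁻¹ • x) K := by
    refine lipschitz_normalize fun x hx => ?_
    have h1 : f x = 1 := hx.2
    have := f.le_opNorm x
    rwa [h1, norm_one] at this
  set L : ℝ≥0∞ := ((2 * ‖f‖₊ : ℝ≥0) : ℝ≥0∞) ^ ((n : ℝ) - 1) with hL
  have hLtop : L ≠ ⊤ := ENNReal.rpow_ne_top_of_nonneg hd0 ENNReal.coe_ne_top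
  have hfS : ∀ u ∈ S, c ≤ f u := by
    rintro u ⟨hu, huC⟩
    have := hfc u huC
    rw [mem_sphere_zero_iff_norm.1 hu, mul_one] at this
    exact this
  have hSK : ∀ u ∈ S, (f u)⁻¹ • u ∈ K ∧ ‖(f u)⁻¹ • u‖⁻¹ • ((f u)⁻¹ • u) = u := by
    intro u hu
    have hpos : 0 < f u := hc.trans_le (hfS u hu)
    refine ⟨⟨hcone _ (by positivity) u hu.2, ?_⟩, ?_⟩
    · change f ((f u)⁻¹ • u) = 1
      rw [map_smul, smul_eq_mul, inv_mul_cancel₀ hpos.ne']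
    · rw [norm_smul, norm_inv, Real.norm_of_nonneg hpos.le, mem_sphere_zero_iff_norm.1 hu.1,
        mul_one, inv_inv, smul_smul, mul_inv_cancel₀ hpos.ne', one_smul]
  have hSfin : μH[(n : ℝ) - 1] S < ⊤ := by
    have hsub : S ⊆ (fun x : EuclideanSpace ℝ (Fin n) => ‖x‖⁻¹ • x) '' K :=
      fun u hu => ⟨_, (hSK u hu).1, (hSK u hu).2⟩
    exact (measure_mono hsub).trans_lt ((hlip.hausdorffMeasure_image_le hd0).trans_lt
      (ENNReal.mul_lt_top hLtop.lt_top hKfin.lt_top))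
  have hΩS : {u : EuclideanSpace ℝ (Fin n) | u ∈ S ∧ ∃ s : ℝ, 0 < s ∧ s • u ∈ E} ⊆ S :=
    fun u hu => hu.1
  rintro r (hr | ⟨hr0, hr1⟩)
  · obtain ⟨δ, hδ, hball⟩ := Metric.isOpen_iff.1 hEcl.isOpen_compl 0 hE0
    have hlow : ∀ u ∈ {u : EuclideanSpace ℝ (Fin n) | u ∈ S ∧ ∃ s : ℝ, 0 < s ∧ s • u ∈ E},
        ENNReal.ofReal (radialFn E u ^ r) ≤ ENNReal.ofReal (δ ^ r) := by
      rintro u ⟨hu, hs⟩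
      refine ENNReal.ofReal_le_ofReal (Real.rpow_le_rpow_of_nonpos hδ ?_ hr.le)
      refine le_csInf hs ?_
      rintro s ⟨hs0, hsE⟩
      by_contra! hlt
      refine hball ?_ hsE
      rw [mem_ball_zero_iff, norm_smul, mem_sphere_zero_iff_norm.1 hu.1,
        Real.norm_of_nonneg hs0.le, mul_one]
      exact hlt
    refine (setLIntegral_mono measurable_const hlow).trans_lt ?_
    rw [setLIntegral_const]
    exact ENNReal.mul_lt_top ENNReal.ofReal_lt_top ((measure_mono hΩS).trans_lt hSfin)
  · have hpC : p ∈ C := hEC hp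
    have hα : 0 < f p := by
      have hp0 : p ≠ 0 := fun h => hE0 (h ▸ hp)
      exact (mul_pos hc (norm_pos_iff.2 hp0)).trans_le (hfc p hpC)
    have hx₀ : (f p)⁻¹ • p ∈ K := by
      refine ⟨hcone _ (by positivity) p hpC, ?_⟩
      change f ((f p)⁻¹ • p) = 1
      rw [map_smul, smul_eq_mul, inv_mul_cancel₀ hα.ne']
    -- `p + C ⊆ E` bounds the radial function over the homothetic copy of `K`.
    have hrad : ∀ t : ℝ, 0 < t → t ≤ 1 → ∀ u ∈ S,
        (f u)⁻¹ • u ∈ AffineMap.homothety ((f p)⁻¹ • p) (1 - t) '' K →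
        radialFn E u ≤ f p / c * t⁻¹ := by
      rintro t ht ht1 u hu ⟨k, hk, hku⟩
      have hpos : 0 < f u := hc.trans_le (hfS u hu)
      rw [AffineMap.homothety_apply, vsub_eq_sub, vadd_eq_add] at hku
      have hs : (f p / (t * f u)) • u = p + (f p / t * (1 - t)) • k := by
        have h1 : (f p / (t * f u)) • u = (f p / t) • ((f u)⁻¹ • u) := by
          rw [smul_smul]; congr 1; field_simp
        rw [h1, ← hku]
        have h2 : (f p / t * t) • ((f p)⁻¹ • p) = p := by
          rw [smul_smul, div_mul_cancel₀ _ ht.ne', mul_inv_cancel₀ hα.ne', one_smul]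
        calc _ = (f p / t * t) • ((f p)⁻¹ • p) + (f p / t * (1 - t)) • k := by
              generalize (f p)⁻¹ • p = q
              module
          _ = _ := by rw [h2]
      have hmem : (f p / (t * f u)) • u ∈ E := by
        have hkr : (f p / t * (1 - t)) • k ∈ recCone E := by
          rw [hrec]
          exact hcone _ (mul_nonneg (by positivity) (by linarith)) k hk.1
        rw [hs]
        exact hkr p hp
      calc radialFn E u ≤ f p / (t * f u) :=
            csInf_le ⟨0, fun _ h => h.1.le⟩ ⟨by positivity, hmem⟩
        _ ≤ f p / (t * c) := by gcongr; exact hfS u hu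
        _ = f p / c * t⁻¹ := by field_simp
    refine (lintegral_mono_set hΩS).trans_lt ?_
    refine lintegral_rpow_lt_top_of_weak (T := f p / c)
      (D := L * (ENNReal.ofReal ((n : ℝ) - 1) * μH[(n : ℝ) - 1] K))
      (radialFn_nonneg E) (by positivity)
      (ENNReal.mul_ne_top hLtop (ENNReal.mul_ne_top ENNReal.ofReal_ne_top hKfin))
      (by rw [Measure.restrict_apply_univ]; exact hSfin.ne) ?_ hr0 hr1
    intro k
    rw [Measure.restrict_apply' hSmeas]
    have ht : (0 : ℝ) < (2 ^ k)⁻¹ := by positivity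
    have ht1 : ((2 : ℝ) ^ k)⁻¹ ≤ 1 := inv_le_one_of_one_le₀ (one_le_pow₀ one_le_two)
    have hsub : {u | f p / c * 2 ^ k < radialFn E u} ∩ S ⊆
        (fun x : EuclideanSpace ℝ (Fin n) => ‖x‖⁻¹ • x) ''
          (K \ (AffineMap.homothety ((f p)⁻¹ • p) (1 - ((2 : ℝ) ^ k)⁻¹) '' K)) := by
      rintro u ⟨hu, huS⟩
      refine ⟨_, ⟨(hSK u huS).1, fun hmem => ?_⟩, (hSK u huS).2⟩
      have := hrad _ ht ht1 u huS hmem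
      rw [inv_inv] at this
      exact (not_le.2 hu) this
    calc _ ≤ _ := measure_mono hsub
      _ ≤ L * μH[(n : ℝ) - 1]
          (K \ (AffineMap.homothety ((f p)⁻¹ • p) (1 - ((2 : ℝ) ^ k)⁻¹) '' K)) :=
        (hlip.mono sdiff_subset).hausdorffMeasure_image_le hd0
      _ ≤ L * (ENNReal.ofReal (((n : ℝ) - 1) * (2 ^ k)⁻¹) * μH[(n : ℝ) - 1] K) := by
        gcongr
        exact measure_diff_homothety_le hKcomp hKconv hd1 hKfin hx₀ ht ht1
      _ = _ := by
        rw [ENNReal.ofReal_mul hd0]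
        ring
end
end

section
/- Let C be a pointed closed convex cone in ℝⁿ with nonempty interior, let q > n, and let Θ be a positive function on C ∖ {0}, homogeneous of degree −q, which is continuously differentiable on an open set containing C ∖ {0}. Then for every z ∈ C with z ≠ 0, the directional-derivative integral identity holds: ∫_{z+C} Θ(x) dH^n(x) = (1/(n − q)) ∫_{z+C} ⟨∇Θ(x), z⟩ dH^n(x), where ∇Θ is the gradient of Θ and both integrals converge absolutely. -/
/-!
The identity is the derivative at `t = 1` of the function
`G t = ∫ x in V, Θ (t • z + x)`, where `V` is the interior of the cone, computed in two ways.
Substituting `x = t • u` and using homogeneity gives `G t = t ^ (n - q) * G 1`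
(`integral_scaling`), so `G' 1 = (n - q) * G 1`. Differentiating under the integral sign gives
`G' 1 = ∫ x in V, fderiv ℝ Θ (z + x) z`.

The domination needed comes from homogeneity together with compactness of the unit vectors of `C`:
`|Θ y| ≤ M ‖y‖ ^ (-q)` and `‖fderiv ℝ Θ y‖ ≤ M' ‖y‖ ^ (-(q + 1))` on `V`. Pointedness
of `C` keeps `t • z + x` away from the origin, with `1 + ‖x‖ ≤ A ‖t • z + x‖` uniformly for `t`
near `1`, and `(1 + ‖x‖) ^ (-r)` is integrable for `r > n`. Passing from `C` to its interior costs
nothing since the frontier of a convex set is a null set; it allows the homogeneity relation to be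
differentiated without discussing boundary points.
-/

open Set MeasureTheory Metric Bornology
open scoped InnerProductSpace ENNReal NNReal Pointwise

noncomputable section

section Aux

variable {n : ℕ} {C : Set (EuclideanSpace ℝ (Fin n))}

/-! ### Pointed cones -/

lemma IsPointedClosedConvexCone.add_mem (hC : IsPointedClosedConvexCone C)
    {x y : EuclideanSpace ℝ (Fin n)} (hx : x ∈ C) (hy : y ∈ C) : x + y ∈ C := by
  obtain ⟨_, hconv, _, hsm, _⟩ := hC
  have h := hconv hx hy (by norm_num : (0 : ℝ) ≤ 1 / 2) (by norm_num : (0 : ℝ) ≤ 1 / 2)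
    (by norm_num)
  have h2 := hsm 2 (by norm_num) _ h
  rwa [smul_add, smul_smul, smul_smul, show (2 : ℝ) * (1 / 2) = 1 by norm_num, one_smul,
    one_smul] at h2

lemma IsPointedClosedConvexCone.add_mem_interior (hC : IsPointedClosedConvexCone C)
    {x y : EuclideanSpace ℝ (Fin n)} (hx : x ∈ C) (hy : y ∈ interior C) :
    x + y ∈ interior C := by
  have hsub : (fun w => x + w) '' interior C ⊆ interior C := by
    apply interior_maximal
    · rintro _ ⟨w, hw, rfl⟩
      exact hC.add_mem hx (interior_subset hw)
    · exact (isOpenMap_add_left x) _ isOpen_interior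
  exact hsub ⟨y, hy, rfl⟩

lemma IsPointedClosedConvexCone.smul_interior (hC : IsPointedClosedConvexCone C)
    {t : ℝ} (ht : 0 < t) : t • interior C = interior C := by
  rw [← interior_smul₀ ht.ne']
  congr 1
  ext x
  rw [mem_smul_set_iff_inv_smul_mem₀ ht.ne']
  constructor
  · intro h
    have := hC.2.2.2.1 t ht.le _ h
    rwa [smul_inv_smul₀ ht.ne'] at this
  · exact hC.2.2.2.1 _ (inv_nonneg.2 ht.le) _

lemma IsPointedClosedConvexCone.add_ne_zero (hC : IsPointedClosedConvexCone C)
    {z : EuclideanSpace ℝ (Fin n)} (hz : z ∈ C) (hz0 : z ≠ 0)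
    {y : EuclideanSpace ℝ (Fin n)} (hy : y ∈ C) : z + y ≠ 0 := by
  intro h
  have h1 : z ∈ C ∩ (-C) := ⟨hz, by
    rw [Set.mem_neg, neg_eq_of_add_eq_zero_right h]; exact hy⟩
  rw [hC.2.2.2.2] at h1
  exact hz0 h1

/-- Quantitative pointedness: translating the cone by a nonzero element of it keeps it away from
the origin, at a distance comparable to `1 + ‖x‖`. -/
lemma IsPointedClosedConvexCone.exists_bound (hC : IsPointedClosedConvexCone C)
    {z : EuclideanSpace ℝ (Fin n)} (hz : z ∈ C) (hz0 : z ≠ 0) :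
    ∃ A : ℝ, 0 < A ∧ ∀ t ∈ Ioo (1 / 2 : ℝ) (3 / 2), ∀ x ∈ C, 1 + ‖x‖ ≤ A * ‖t • z + x‖ := by
  set w := (1 / 2 : ℝ) • z with hw
  have hwC : w ∈ C := hC.2.2.2.1 _ (by norm_num) _ hz
  have hw0 : w ≠ 0 := smul_ne_zero (by norm_num) hz0
  have hcl : IsClosed ((fun x => w + x) '' C) := (Homeomorph.addLeft w).isClosedMap _ hC.1
  have hnot : (0 : EuclideanSpace ℝ (Fin n)) ∉ (fun x => w + x) '' C := by
    rintro ⟨y, hy, h⟩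
    exact hC.add_ne_zero hwC hw0 hy h
  obtain ⟨d, hd, hball⟩ := Metric.isOpen_iff.1 hcl.isOpen_compl 0 hnot
  refine ⟨1 / d + 1 + 3 / 2 * ‖z‖ / d, by positivity, fun t ht x hx => ?_⟩
  have hmem : t • z + x ∈ (fun x => w + x) '' C := by
    refine ⟨(t - 1 / 2) • z + x,
      hC.add_mem (hC.2.2.2.1 _ (by linarith [ht.1]) _ hz) hx, ?_⟩
    simp only [hw]
    module
  have hdle : d ≤ ‖t • z + x‖ := by
    by_contra! h
    exact hball (by simpa using h) hmem
  have h1 : 1 ≤ ‖t • z + x‖ / d := (one_le_div hd).2 hdle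
  have h2 : ‖x‖ ≤ ‖t • z + x‖ + 3 / 2 * ‖z‖ := by
    have : ‖x‖ ≤ ‖t • z + x‖ + ‖t • z‖ := by
      have := norm_sub_le (t • z + x) (t • z)
      rwa [add_sub_cancel_left] at this
    rw [norm_smul, Real.norm_of_nonneg (by linarith [ht.1])] at this
    nlinarith [ht.2, norm_nonneg z]
  have h3 : 3 / 2 * ‖z‖ ≤ 3 / 2 * ‖z‖ * (‖t • z + x‖ / d) :=
    le_mul_of_one_le_right (by positivity) h1
  calc 1 + ‖x‖ ≤ ‖t • z + x‖ / d + (‖t • z + x‖ + 3 / 2 * ‖z‖ * (‖t • z + x‖ / d)) := by linarith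
    _ = _ := by ring

/-! ### Homogeneous functions -/

lemma IsPointedClosedConvexCone.isCompact_inter_sphere (hC : IsPointedClosedConvexCone C) :
    IsCompact (C ∩ sphere 0 1) :=
  (isCompact_sphere _ _).inter_left hC.1

/-- A function which is homogeneous of degree `-r` along the rays through `V ⊆ C` and continuous on
the compact set of unit vectors of `C` is bounded on `V` by a multiple of `‖y‖ ^ (-r)`. -/
lemma IsPointedClosedConvexCone.exists_norm_le {F : Type*} [NormedAddCommGroup F]
    [NormedSpace ℝ F] (hC : IsPointedClosedConvexCone C) {V : Set (EuclideanSpace ℝ (Fin n))}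
    (hVC : V ⊆ C)
    {f : EuclideanSpace ℝ (Fin n) → F} (hf : ContinuousOn f (C ∩ sphere 0 1)) {r : ℝ}
    (hhom : ∀ l : ℝ, 0 < l → ∀ x ∈ V, f (l • x) = l ^ (-r) • f x) :
    ∃ M : ℝ, 0 ≤ M ∧ ∀ y ∈ V, y ≠ 0 → ‖f y‖ ≤ M * ‖y‖ ^ (-r) := by
  obtain ⟨M, hM⟩ := hC.isCompact_inter_sphere.exists_bound_of_continuousOn hf
  refine ⟨max M 0, le_max_right _ _, fun y hy hy0 => ?_⟩
  have hn : 0 < ‖y‖ := norm_pos_iff.2 hy0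
  have hu : ‖y‖⁻¹ • y ∈ C ∩ sphere 0 1 := by
    refine ⟨hC.2.2.2.1 _ (by positivity) _ (hVC hy), ?_⟩
    simp [norm_smul, hn.ne']
  have h1 := hM _ hu
  rw [hhom _ (inv_pos.2 hn) y hy, norm_smul, Real.norm_of_nonneg (by positivity),
    Real.inv_rpow hn.le, Real.rpow_neg hn.le, inv_inv] at h1
  rw [Real.rpow_neg hn.le, ← div_eq_mul_inv, le_div_iff₀ (by positivity), mul_comm]
  exact h1.trans (le_max_left _ _)

lemma rpow_neg_bound {A a b r : ℝ} (hA : 0 < A) (ha : 0 < a) (hr : 0 ≤ r) (h : a ≤ A * b) :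
    b ^ (-r) ≤ A ^ r * a ^ (-r) := by
  have hb : 0 < b := by
    by_contra! hb
    nlinarith
  have h1 : a ^ r ≤ A ^ r * b ^ r := by
    rw [← Real.mul_rpow hA.le hb.le]
    exact Real.rpow_le_rpow ha.le h hr
  rw [Real.rpow_neg hb.le, Real.rpow_neg ha.le, ← div_eq_mul_inv, le_div_iff₀ (by positivity),
    inv_mul_le_iff₀ (by positivity)]
  linarith

/-- The derivative of a function homogeneous of degree `-q` on the interior of the cone is
homogeneous of degree `-(q + 1)`. -/
lemma fderiv_homogeneous {q : ℝ}
    {Θ : EuclideanSpace ℝ (Fin n) → ℝ}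
    (hhom : ∀ l : ℝ, 0 < l → ∀ x ∈ interior C, Θ (l • x) = l ^ (-q) * Θ x)
    {l : ℝ} (hl : 0 < l) {x : EuclideanSpace ℝ (Fin n)} (hx : x ∈ interior C)
    (hdx : DifferentiableAt ℝ Θ x) :
    fderiv ℝ Θ (l • x) = l ^ (-(q + 1)) • fderiv ℝ Θ x := by
  have hev : (fun y => Θ (l • y)) =ᶠ[nhds x] fun y => l ^ (-q) • Θ y := by
    filter_upwards [isOpen_interior.mem_nhds hx] with y hy
    exact hhom l hl y hy
  have h := hev.fderiv_eq (𝕜 := ℝ)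
  rw [fderiv_comp_smul (f := Θ) (c := l), fderiv_fun_const_smul hdx] at h
  rw [show -(q + 1) = -q - 1 by ring, Real.rpow_sub_one hl.ne', div_eq_inv_mul, mul_smul, ← h,
    smul_smul, inv_mul_cancel₀ hl.ne', one_smul]

lemma integral_scaling (hC : IsPointedClosedConvexCone C) {q : ℝ}
    {Θ : EuclideanSpace ℝ (Fin n) → ℝ}
    (hhom : ∀ l : ℝ, 0 < l → ∀ x ∈ interior C, Θ (l • x) = l ^ (-q) * Θ x)
    {z : EuclideanSpace ℝ (Fin n)} (hz : z ∈ C) {t : ℝ} (ht : 0 < t) :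
    ∫ x in interior C, Θ (t • z + x) = t ^ ((n : ℝ) - q) * ∫ x in interior C, Θ (z + x) := by
  have h := Measure.setIntegral_comp_smul_of_pos volume (fun x => Θ (t • z + x))
    (interior C) ht
  rw [hC.smul_interior ht, finrank_euclideanSpace_fin] at h
  have h2 : ∫ x in interior C, Θ (t • z + t • x)
      = t ^ (-q) * ∫ x in interior C, Θ (z + x) := by
    rw [← integral_const_mul]
    refine setIntegral_congr_fun isOpen_interior.measurableSet fun x hx => ?_
    rw [← smul_add, hhom t ht _ (hC.add_mem_interior hz hx)]
  rw [h2, smul_eq_mul, eq_inv_mul_iff_mul_eq₀ (by positivity)] at h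
  rw [← h, sub_eq_add_neg, Real.rpow_add ht, Real.rpow_natCast, mul_assoc]

end Aux

/-! ### The integral identity -/

theorem stmt17 {n : ℕ} (hn : 2 ≤ n) (C : Set (EuclideanSpace ℝ (Fin n)))
    (hC : IsPointedClosedConvexCone C)
    (q : ℝ) (hq : (n : ℝ) < q) (Θ : EuclideanSpace ℝ (Fin n) → ℝ)
    (U : Set (EuclideanSpace ℝ (Fin n))) (hU : IsOpen U) (hCU : C \ {0} ⊆ U)
    (hΘdiff : ContDiffOn ℝ 1 Θ U)
    (hΘpos : ∀ x ∈ C \ {0}, 0 < Θ x)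
    (hΘhom : ∀ l : ℝ, 0 < l → ∀ x ∈ C \ {0}, Θ (l • x) = l ^ (-q) * Θ x)
    (z : EuclideanSpace ℝ (Fin n)) (hz : z ∈ C) (hz0 : z ≠ 0) :
    IntegrableOn Θ ((fun x => z + x) '' C) volume ∧
    IntegrableOn (fun x => ⟪gradient Θ x, z⟫_ℝ) ((fun x => z + x) '' C) volume ∧
    ∫ x in (fun x => z + x) '' C, Θ x ∂volume
      = (1 / ((n : ℝ) - q)) * ∫ x in (fun x => z + x) '' C, ⟪gradient Θ x, z⟫_ℝ ∂volume := by
  have hqn : (0 : ℝ) ≤ q := (Nat.cast_nonneg n).trans hq.le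
  set V := interior C with hV
  have hVm : MeasurableSet V := isOpen_interior.measurableSet
  have hVC : V ⊆ C := interior_subset
  have hmem : ∀ t : ℝ, 0 < t → ∀ x ∈ V, t • z + x ∈ V ∧ t • z + x ≠ 0 := fun t ht x hx =>
    have h := hC.2.2.2.1 t ht.le z hz
    ⟨hC.add_mem_interior h hx, hC.add_ne_zero h (smul_ne_zero ht.ne' hz0) (hVC hx)⟩
  -- In positive dimension the origin, an extreme point of a pointed cone, is not interior.
  have hV0 : (0 : EuclideanSpace ℝ (Fin n)) ∉ V := by
    intro h0
    have h1 : interior C ∩ -interior C ∈ nhds (0 : EuclideanSpace ℝ (Fin n)) := by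
      refine (isOpen_interior.inter isOpen_interior.neg).mem_nhds ⟨h0, ?_⟩
      simpa using h0
    obtain ⟨ε, hε, hb⟩ := Metric.mem_nhds_iff.1 h1
    have hzn : 0 < ‖z‖ := norm_pos_iff.2 hz0
    have hw : (ε / 2 * ‖z‖⁻¹) • z ∈ ball (0 : EuclideanSpace ℝ (Fin n)) ε := by
      rw [mem_ball_zero_iff, norm_smul, Real.norm_of_nonneg (by positivity), mul_assoc,
        inv_mul_cancel₀ hzn.ne']
      linarith
    have hw2 : (ε / 2 * ‖z‖⁻¹) • z ∈ C ∩ (-C) := ⟨hVC (hb hw).1, hVC (hb hw).2⟩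
    rw [hC.2.2.2.2] at hw2
    exact smul_ne_zero (by positivity) hz0 hw2
  have hVC0 : V ⊆ C \ {0} := fun x hx => ⟨hVC hx, fun h => hV0 (h ▸ hx)⟩
  have hhom : ∀ l : ℝ, 0 < l → ∀ x ∈ V, Θ (l • x) = l ^ (-q) * Θ x :=
    fun l hl x hx => hΘhom l hl x (hVC0 hx)
  have hdiff : ∀ x ∈ V, DifferentiableAt ℝ Θ x := fun x hx =>
    (hΘdiff.differentiableOn one_ne_zero).differentiableAt (hU.mem_nhds (hCU (hVC0 hx)))
  have hcont : ContinuousOn (fderiv ℝ Θ) U := hΘdiff.continuousOn_fderiv_of_isOpen hU le_rfl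
  have hSU : C ∩ sphere 0 1 ⊆ U := fun x hx => hCU ⟨hx.1, fun h => by
    rw [mem_singleton_iff] at h
    simpa [h] using hx.2⟩
  obtain ⟨A, hA, hAb⟩ := hC.exists_bound hz hz0
  obtain ⟨M, hM, hMb⟩ := hC.exists_norm_le hVC (hΘdiff.continuousOn.mono hSU) (r := q)
    (fun l hl x hx => by rw [smul_eq_mul]; exact hhom l hl x hx)
  obtain ⟨M', hM', hMb'⟩ := hC.exists_norm_le hVC (hcont.mono hSU) (r := q + 1)
    (fun l hl x hx => fderiv_homogeneous hhom hl hx (hdiff x hx))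
  have hfin : ∀ r : ℝ, (n : ℝ) < r →
      Integrable (fun x : EuclideanSpace ℝ (Fin n) => (1 + ‖x‖) ^ (-r)) volume := fun r hr =>
    integrable_one_add_norm (by rwa [finrank_euclideanSpace_fin])
  have hmap : ∀ t : ℝ, 0 < t → MapsTo (fun x => t • z + x) V U := fun t ht x hx =>
    hCU (hVC0 (hmem t ht x hx).1)
  have hmeas : ∀ t : ℝ, 0 < t →
      AEStronglyMeasurable (fun x => Θ (t • z + x)) (volume.restrict V) := fun t ht =>
    (hΘdiff.continuousOn.comp (by fun_prop) (hmap t ht)).aestronglyMeasurable hVm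
  have hmeas' : AEStronglyMeasurable (fun x => fderiv ℝ Θ ((1 : ℝ) • z + x) z)
      (volume.restrict V) :=
    ((hcont.comp (by fun_prop) (hmap 1 one_pos)).clm_apply
      continuousOn_const).aestronglyMeasurable hVm
  have hone : (1 : ℝ) ∈ Ioo (1 / 2 : ℝ) (3 / 2) := by constructor <;> norm_num
  have hint : Integrable (fun x => Θ ((1 : ℝ) • z + x)) (volume.restrict V) := by
    refine Integrable.mono' (((hfin q hq).const_mul (M * A ^ q)).integrableOn (s := V))
      (hmeas 1 one_pos) ?_
    refine (ae_restrict_iff' hVm).2 (Filter.Eventually.of_forall fun x hx => ?_)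
    obtain ⟨h1, h2⟩ := hmem 1 one_pos x hx
    refine (hMb _ h1 h2).trans ?_
    rw [mul_assoc]
    exact mul_le_mul_of_nonneg_left (rpow_neg_bound hA (by positivity) hqn
      (hAb 1 hone x (hVC hx))) hM
  have key := hasDerivAt_integral_of_dominated_loc_of_deriv_le
    (μ := volume.restrict V) (F := fun t x => Θ (t • z + x))
    (F' := fun t x => fderiv ℝ Θ (t • z + x) z) (x₀ := (1 : ℝ))
    (s := Ioo (1 / 2 : ℝ) (3 / 2))
    (bound := fun x => M' * A ^ (q + 1) * ‖z‖ * (1 + ‖x‖) ^ (-(q + 1)))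
    (Ioo_mem_nhds hone.1 hone.2)
    (by
      filter_upwards [Ioo_mem_nhds hone.1 hone.2] with t ht
      exact hmeas t (by linarith [ht.1]))
    hint hmeas'
    (by
      refine (ae_restrict_iff' hVm).2 (Filter.Eventually.of_forall fun x hx t ht => ?_)
      obtain ⟨h1, h2⟩ := hmem t (by linarith [ht.1]) x hx
      refine (ContinuousLinearMap.le_opNorm _ _).trans ?_
      have h3 := rpow_neg_bound hA (by positivity) (by linarith : 0 ≤ q + 1)
        (hAb t ht x (hVC hx))
      calc ‖fderiv ℝ Θ (t • z + x)‖ * ‖z‖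
          ≤ (M' * (A ^ (q + 1) * (1 + ‖x‖) ^ (-(q + 1)))) * ‖z‖ := by
            refine mul_le_mul_of_nonneg_right ((hMb' _ h1 h2).trans ?_) (norm_nonneg _)
            exact mul_le_mul_of_nonneg_left h3 hM'
        _ = _ := by ring)
    (((hfin (q + 1) (by linarith)).const_mul _).integrableOn)
    (by
      refine (ae_restrict_iff' hVm).2 (Filter.Eventually.of_forall fun x hx t ht => ?_)
      obtain ⟨h1, _⟩ := hmem t (by linarith [ht.1]) x hx
      have h4 : HasDerivAt (fun t : ℝ => t • z + x) z t := by
        simpa using ((hasDerivAt_id t).smul_const z).add_const x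
      exact (hdiff _ h1).hasFDerivAt.comp_hasDerivAt t h4)
  obtain ⟨hint', hder⟩ := key
  simp only [one_smul] at hint hint' hder
  have hder2 : HasDerivAt (fun t : ℝ => ∫ x in V, Θ (t • z + x))
      (((n : ℝ) - q) * ∫ x in V, Θ (z + x)) 1 := by
    have h5 : HasDerivAt (fun t : ℝ => t ^ ((n : ℝ) - q) * ∫ x in V, Θ (z + x))
        (((n : ℝ) - q) * ∫ x in V, Θ (z + x)) 1 := by
      have := (Real.hasDerivAt_rpow_const (x := (1 : ℝ)) (p := (n : ℝ) - q)
        (Or.inl one_ne_zero)).mul_const (∫ x in V, Θ (z + x))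
      simpa using this
    refine h5.congr_of_eventuallyEq ?_
    filter_upwards [lt_mem_nhds one_pos] with t ht
    exact integral_scaling hC hhom hz ht
  have hEq := hder.unique hder2
  have hVae : V =ᵐ[volume] C :=
    interior_ae_eq_of_null_frontier (hC.2.1.addHaar_frontier volume)
  have hres : volume.restrict V = volume.restrict C := Measure.restrict_congr_set hVae
  rw [hres] at hint hint' hEq
  have hgrad : (fun x => ⟪gradient Θ x, z⟫_ℝ) = fun x => fderiv ℝ Θ x z := by
    funext x
    simp [gradient, InnerProductSpace.toDual_symm_apply]
  rw [hgrad]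
  have hmp : MeasurePreserving (fun x => z + x) (volume : Measure (EuclideanSpace ℝ (Fin n)))
    volume := measurePreserving_add_left volume z
  have hemb : MeasurableEmbedding (fun x : EuclideanSpace ℝ (Fin n) => z + x) :=
    measurableEmbedding_addLeft z
  refine ⟨(hmp.integrableOn_image hemb).2 hint, (hmp.integrableOn_image hemb).2 hint', ?_⟩
  rw [hmp.setIntegral_image_emb hemb, hmp.setIntegral_image_emb hemb, hEq]
  have : (n : ℝ) - q ≠ 0 := by linarith
  field_simp
end
end

section
/- Let C be a pointed closed convex cone in ℝⁿ with nonempty interior, let 0 ≤ q ≤ n − 1, and let Θ : C ∖ {0} → (0, ∞) be a continuous function homogeneous of degree −q. Let E₁ and E₂ be C-pseudo-cones whose weighted co-volumes V̄_Θ(E_i) = ∫_{C ∖ E_i} Θ(x) dH^n(x) are finite. Then the Minkowski sum E₁ + E₂ satisfies the Brunn–Minkowski-type inequality V̄_Θ(E₁ + E₂)^{1/(n−q)} ≤ V̄_Θ(E₁)^{1/(n−q)} + V̄_Θ(E₂)^{1/(n−q)}. Moreover, if 0 ≤ q < n − 1, equality holds if and only if E₁ and E₂ are dilates of each other, i.e.,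 E₂ = λE₁ for some λ > 0. -/
/-!
In polar coordinates, homogeneity of `Θ` turns the weighted co-volume of a `C`-pseudo-cone `E` into
`∫ ρ_E ^ p dν`, where `p = n - q ≥ 1`, `ρ_E` is the radial function with values in `[0, ∞]`, and `ν`
is the measure `p⁻¹ Θ(u) du` on the part of the unit sphere in `C` (`lintegral_eq_sphere`,
`covolume_eq`). If `ρ₁(u)` and `ρ₂(u)` are finite, then `ρ₁(u) u + ρ₂(u) u` lies in `E₁ + E₂`, so the
co-volume of the sum is at most `∫ (ρ₁ + ρ₂) ^ p dν` (`covolume_add_le`), and the inequality is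
Minkowski's inequality in `L^p(ν)`.

If `p > 1` and equality holds, then Minkowski's inequality is an equality too, and strict convexity
of `t ^ p` makes `ρ₁` and `ρ₂` proportional `ν`-almost everywhere (`minkowski_eq_case`). This uses
that the co-volumes are positive (`covolume_ne_zero`) and finite. So `E₂` and a dilate of `E₁` differ
by a null set; both are closed convex sets with nonempty interior, hence equal
(`smul_eq_of_extRadialFn`). Conversely, convexity gives `E + l • E = (1 + l) • E`, and
`V ^ (1 / p)` scales linearly under dilation (`covolume_smul_rpow`).
-/

open Set MeasureTheory Metric Bornology
open scoped InnerProductSpace ENNReal NNReal Pointwise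

noncomputable section

/-! ### Polar coordinates -/

/-- Integration in polar coordinates for a nonnegative function that need not be radial. -/
theorem lintegral_polar {n : ℕ} (hn : 1 ≤ n) {F : EuclideanSpace ℝ (Fin n) → ℝ≥0∞}
    (hF : Measurable F) :
    ∫⁻ x, F x = ∫⁻ u : sphere (0 : EuclideanSpace ℝ (Fin n)) 1,
      (∫⁻ r in Ioi (0 : ℝ), ENNReal.ofReal (r ^ (n - 1)) *
        F (r • (u : EuclideanSpace ℝ (Fin n))))
      ∂(volume : Measure (EuclideanSpace ℝ (Fin n))).toSphere := by
  have : Nonempty (Fin n) := ⟨⟨0, hn⟩⟩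
  have hmp := (volume : Measure (EuclideanSpace ℝ (Fin n))).measurePreserving_homeomorphUnitSphereProd
  have hsm : Measurable fun z : sphere (0 : EuclideanSpace ℝ (Fin n)) 1 × Ioi (0 : ℝ) =>
      F ((z.2 : ℝ) • (z.1 : EuclideanSpace ℝ (Fin n))) := by fun_prop
  calc ∫⁻ x, F x = ∫⁻ x in ({0}ᶜ : Set (EuclideanSpace ℝ (Fin n))), F x := by
        rw [restrict_compl_singleton]
    _ = ∫⁻ x : ({0}ᶜ : Set (EuclideanSpace ℝ (Fin n))), F (x : EuclideanSpace ℝ (Fin n))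
          ∂((volume : Measure (EuclideanSpace ℝ (Fin n))).comap Subtype.val) :=
        (lintegral_subtype_comap (measurableSet_singleton _).compl F).symm
    _ = ∫⁻ x : ({0}ᶜ : Set (EuclideanSpace ℝ (Fin n))),
          F (((homeomorphUnitSphereProd _ x).2 : ℝ) •
            ((homeomorphUnitSphereProd _ x).1 : EuclideanSpace ℝ (Fin n)))
          ∂((volume : Measure (EuclideanSpace ℝ (Fin n))).comap Subtype.val) := by
        refine lintegral_congr fun x => ?_
        congr 1
        have hx : ‖(x : EuclideanSpace ℝ (Fin n))‖ ≠ 0 := norm_ne_zero_iff.2 x.2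
        simp [smul_smul, hx]
    _ = ∫⁻ z, F ((z.2 : ℝ) • (z.1 : EuclideanSpace ℝ (Fin n)))
          ∂((volume : Measure (EuclideanSpace ℝ (Fin n))).toSphere.prod
            (Measure.volumeIoiPow (Module.finrank ℝ (EuclideanSpace ℝ (Fin n)) - 1))) :=
        hmp.lintegral_comp hsm
    _ = _ := by
        rw [lintegral_prod _ hsm.aemeasurable]
        refine lintegral_congr fun u => ?_
        have hFu : Measurable fun r : ℝ => F (r • (u : EuclideanSpace ℝ (Fin n))) := by fun_prop
        rw [Measure.volumeIoiPow, finrank_euclideanSpace_fin,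
          ← lintegral_subtype_comap measurableSet_Ioi]
        exact lintegral_withDensity_eq_lintegral_mul _ (by fun_prop)
          (hFu.comp measurable_subtype_coe)

/-- The radial integral `∫₀^g r^(p-1) dr = g^p / p`, including the case `g = ∞`. -/
theorem lintegral_rpow_lt {p : ℝ} (hp : 1 ≤ p) (g : ℝ≥0∞) :
    ∫⁻ r in Ioi (0 : ℝ), {r : ℝ | ENNReal.ofReal r < g}.indicator
      (fun r => ENNReal.ofReal (r ^ (p - 1))) r = ENNReal.ofReal p⁻¹ * g ^ p := by
  have hp0 : 0 < p := by linarith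
  have fin : ∀ G : ℝ, 0 ≤ G → ∫⁻ r in Ioi (0 : ℝ), {r : ℝ | ENNReal.ofReal r < ENNReal.ofReal G}.indicator
      (fun r => ENNReal.ofReal (r ^ (p - 1))) r = ENNReal.ofReal p⁻¹ * (ENNReal.ofReal G) ^ p := by
    intro G hG
    have hms : MeasurableSet {r : ℝ | ENNReal.ofReal r < ENNReal.ofReal G} :=
      measurableSet_lt (by fun_prop) (by fun_prop)
    rw [setLIntegral_indicator hms]
    have : {r : ℝ | ENNReal.ofReal r < ENNReal.ofReal G} ∩ Ioi 0 = Ioo 0 G := by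
      ext r
      simp only [mem_inter_iff, mem_ofPred_eq, mem_Ioi, mem_Ioo]
      constructor
      · rintro ⟨h, h0⟩
        exact ⟨h0, (ENNReal.ofReal_lt_ofReal_iff_of_nonneg h0.le).1 h⟩
      · rintro ⟨h0, h⟩
        exact ⟨(ENNReal.ofReal_lt_ofReal_iff_of_nonneg h0.le).2 h, h0⟩
    rw [this, Measure.restrict_congr_set Ioo_ae_eq_Ioc, ← ofReal_integral_eq_lintegral_ofReal
      (intervalIntegral.intervalIntegrable_rpow' (by linarith)).1,
      ← intervalIntegral.integral_of_le hG, integral_rpow (Or.inl (by linarith)),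
      ENNReal.ofReal_rpow_of_nonneg hG hp0.le, ← ENNReal.ofReal_mul (by positivity)]
    · congr 1
      rw [sub_add_cancel, Real.zero_rpow hp0.ne']
      field_simp
      simp
    · filter_upwards [ae_restrict_mem measurableSet_Ioc] with y hy
      exact Real.rpow_nonneg hy.1.le _
  rcases eq_or_ne g ⊤ with rfl | hg
  · -- The integral over `(0, ∞)` dominates the integrals over all `(0, G)`.
    rw [ENNReal.top_rpow_of_pos hp0, ENNReal.mul_top (by simpa using hp0)]
    refine eq_top_mono (a := ⨆ k : ℕ, ENNReal.ofReal p⁻¹ * (ENNReal.ofReal (k : ℝ)) ^ p) ?_ ?_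
    · refine iSup_le fun k => ?_
      rw [← fin k (Nat.cast_nonneg k)]
      refine lintegral_mono fun r => ?_
      exact indicator_le_indicator_of_subset
        (fun r (hr : ENNReal.ofReal r < _) => hr.trans_le le_top) (fun _ => zero_le) r
    · rw [← ENNReal.mul_iSup, ENNReal.mul_eq_top]
      left
      refine ⟨by simpa using hp0, ?_⟩
      refine ENNReal.eq_top_of_forall_nnreal_le fun r => ?_
      obtain ⟨k, hk⟩ := exists_nat_ge (max r 1)
      refine le_iSup_of_le k ?_
      have h1 : (1 : ℝ≥0∞) ≤ k := by exact_mod_cast (le_max_right _ _).trans hk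
      calc (r : ℝ≥0∞) ≤ k := by exact_mod_cast (le_max_left _ _).trans hk
        _ = (k : ℝ≥0∞) ^ (1 : ℝ) := by simp
        _ ≤ (k : ℝ≥0∞) ^ p := ENNReal.rpow_le_rpow_of_exponent_le h1 hp
        _ = _ := by simp
  · rw [← ENNReal.ofReal_toReal hg]
    exact fin _ ENNReal.toReal_nonneg

/-! ### The equality case of Minkowski's inequality -/

/-- Strict convexity of `t ↦ t ^ p` at the points `x / a`, `y / b` with weights proportional to
`a`, `b`. -/
theorem real_minkowski_lt {p a b x y : ℝ} (hp : 1 < p) (ha : 0 < a) (hb : 0 < b)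
    (hx : 0 ≤ x) (hy : 0 ≤ y) (hne : b * x ≠ a * y) :
    (x + y) ^ p < (a + b) ^ (p - 1) * (a ^ (1 - p) * x ^ p + b ^ (1 - p) * y ^ p) := by
  have hab : 0 < a + b := by positivity
  have hxy : x / a ≠ y / b := by
    intro h
    rw [div_eq_div_iff ha.ne' hb.ne'] at h
    exact hne (by linarith)
  have h := (strictConvexOn_rpow hp).2 (mem_Ici.2 (show 0 ≤ x / a by positivity))
    (mem_Ici.2 (show 0 ≤ y / b by positivity)) hxy (show 0 < a / (a + b) by positivity)
    (show 0 < b / (a + b) by positivity) (by field_simp)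
  simp only [smul_eq_mul] at h
  have e1 : a / (a + b) * (x / a) + b / (a + b) * (y / b) = (x + y) / (a + b) := by field_simp
  rw [e1, Real.div_rpow (by positivity) hab.le, Real.div_rpow hx ha.le, Real.div_rpow hy hb.le,
    div_lt_iff₀ (by positivity)] at h
  refine h.trans_eq ?_
  rw [Real.rpow_sub hab, Real.rpow_sub ha, Real.rpow_sub hb]
  simp only [Real.rpow_one]
  field_simp

theorem real_minkowski_le {p a b x y : ℝ} (hp : 1 < p) (ha : 0 < a) (hb : 0 < b)
    (hx : 0 ≤ x) (hy : 0 ≤ y) :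
    (x + y) ^ p ≤ (a + b) ^ (p - 1) * (a ^ (1 - p) * x ^ p + b ^ (1 - p) * y ^ p) := by
  by_cases hne : b * x = a * y
  · have hyx : y = b * (x / a) := by field_simp; linarith
    have hxx : x = a * (x / a) := by field_simp
    have ht : 0 ≤ x / a := by positivity
    generalize x / a = t at *
    subst hyx hxx
    have hab : 0 < a + b := by positivity
    rw [← add_mul, Real.mul_rpow hab.le ht, Real.mul_rpow ha.le ht, Real.mul_rpow hb.le ht,
      ← mul_assoc, ← mul_assoc, ← Real.rpow_add ha, ← Real.rpow_add hb, Real.rpow_sub hab]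
    simp only [sub_add_cancel, Real.rpow_one]
    apply le_of_eq
    field_simp
  · exact (real_minkowski_lt hp ha hb hx hy hne).le

/-- Two functions with equality in Minkowski's inequality for the `L^p` norm, `p > 1`, are
proportional almost everywhere. -/
theorem minkowski_eq_case {α : Type*} [MeasurableSpace α] {ν : Measure α} {f g : α → ℝ≥0∞}
    (hf : Measurable f) (hg : Measurable g) {p a b : ℝ} (hp : 1 < p) (ha : 0 < a) (hb : 0 < b)
    (hfa : ∫⁻ u, f u ^ p ∂ν = ENNReal.ofReal (a ^ p))
    (hgb : ∫⁻ u, g u ^ p ∂ν = ENNReal.ofReal (b ^ p))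
    (hfg : ENNReal.ofReal ((a + b) ^ p) ≤ ∫⁻ u, (f u + g u) ^ p ∂ν) :
    ∀ᵐ u ∂ν, ENNReal.ofReal b * f u = ENNReal.ofReal a * g u := by
  have hp0 : 0 < p := by linarith
  have hab : 0 < a + b := by positivity
  have fin : ∀ {h : α → ℝ≥0∞} {c : ℝ}, Measurable h →
      ∫⁻ u, h u ^ p ∂ν = ENNReal.ofReal (c ^ p) → ∀ᵐ u ∂ν, h u ≠ ⊤ := by
    intro h c hh hc
    filter_upwards [ae_lt_top (hh.pow_const p) (by rw [hc]; exact ENNReal.ofReal_ne_top)] with u hu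
    intro htop
    simp [htop, hp0] at hu
  set A := (a + b) ^ (p - 1) * a ^ (1 - p) with hA
  set B := (a + b) ^ (p - 1) * b ^ (1 - p) with hB
  have hA0 : 0 ≤ A := by positivity
  have hB0 : 0 ≤ B := by positivity
  have conv : ∀ {s t : ℝ≥0∞}, s ≠ ⊤ → t ≠ ⊤ →
      (s + t) ^ p = ENNReal.ofReal ((s.toReal + t.toReal) ^ p) ∧
      ENNReal.ofReal A * s ^ p + ENNReal.ofReal B * t ^ p =
        ENNReal.ofReal ((a + b) ^ (p - 1) *
          (a ^ (1 - p) * s.toReal ^ p + b ^ (1 - p) * t.toReal ^ p)) := by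
    intro s t hs ht
    lift s to ℝ≥0 using hs
    lift t to ℝ≥0 using ht
    have e : ∀ s : ℝ≥0, (s : ℝ≥0∞) ^ p = ENNReal.ofReal ((s : ℝ) ^ p) := by
      intro s
      rw [← ENNReal.ofReal_rpow_of_nonneg s.coe_nonneg hp0.le, ENNReal.ofReal_coe_nnreal]
    constructor
    · rw [← ENNReal.coe_add, e]
      simp
    · rw [e, e, ← ENNReal.ofReal_mul hA0, ← ENNReal.ofReal_mul hB0,
        ← ENNReal.ofReal_add (by positivity) (by positivity)]
      congr 1
      simp only [hA, hB, ENNReal.coe_toReal]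
      ring
  -- The pointwise convexity bound integrates to an equality, so it is an equality almost
  -- everywhere, and strict convexity applies.
  have hle : ∀ᵐ u ∂ν, (f u + g u) ^ p ≤ ENNReal.ofReal A * f u ^ p + ENNReal.ofReal B * g u ^ p := by
    filter_upwards [fin hf hfa, fin hg hgb] with u h1 h2
    rw [(conv h1 h2).1, (conv h1 h2).2]
    exact ENNReal.ofReal_le_ofReal
      (real_minkowski_le hp ha hb ENNReal.toReal_nonneg ENNReal.toReal_nonneg)
  have hint : ∫⁻ u, (ENNReal.ofReal A * f u ^ p + ENNReal.ofReal B * g u ^ p) ∂ν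
      = ENNReal.ofReal ((a + b) ^ p) := by
    rw [lintegral_add_left (by fun_prop), lintegral_const_mul _ (by fun_prop),
      lintegral_const_mul _ (by fun_prop), hfa, hgb, ← ENNReal.ofReal_mul hA0,
      ← ENNReal.ofReal_mul hB0, ← ENNReal.ofReal_add (by positivity) (by positivity)]
    congr 1
    rw [hA, hB, mul_assoc, mul_assoc, ← Real.rpow_add ha, ← Real.rpow_add hb,
      Real.rpow_sub hab]
    simp only [sub_add_cancel, Real.rpow_one]
    field_simp
  have heq := ae_eq_of_ae_le_of_lintegral_le hle
    (ne_top_of_le_ne_top (by rw [hint]; exact ENNReal.ofReal_ne_top) (lintegral_mono_ae hle))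
    (by fun_prop) (hint.trans_le hfg)
  filter_upwards [heq, fin hf hfa, fin hg hgb] with u hu h1 h2
  by_contra hne
  rw [(conv h1 h2).1, (conv h1 h2).2] at hu
  refine ((ENNReal.ofReal_lt_ofReal_iff_of_nonneg (by positivity)).2
    (real_minkowski_lt hp ha hb ENNReal.toReal_nonneg ENNReal.toReal_nonneg ?_)).ne hu
  intro h
  apply hne
  rw [← ENNReal.ofReal_toReal h1, ← ENNReal.ofReal_toReal h2, ← ENNReal.ofReal_mul hb.le,
    ← ENNReal.ofReal_mul ha.le, h]

/-! ### Extended radial functions -/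

/-- The radial function of `E` with values in `[0, ∞]`: it is `∞` in directions whose ray misses
`E`, where the real-valued `radialFn` takes the junk value `0`. -/
def extRadialFn {n : ℕ} (E : Set (EuclideanSpace ℝ (Fin n))) (u : EuclideanSpace ℝ (Fin n)) :
    ℝ≥0∞ :=
  ⨅ (r : ℝ) (_ : 0 < r ∧ r • u ∈ E), ENNReal.ofReal r

/-- Because `E` is closed and stable under dilations by factors `≥ 1`, each ray meets it in a closed
half-line; `r = 0` is allowed because `0 ∉ E`. -/
theorem extRadialFn_le_iff {n : ℕ} {E : Set (EuclideanSpace ℝ (Fin n))} (hE : IsPseudoCone E)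
    (u : EuclideanSpace ℝ (Fin n)) {r : ℝ} (hr : 0 ≤ r) :
    extRadialFn E u ≤ ENNReal.ofReal r ↔ r • u ∈ E := by
  obtain ⟨-, hcl, -, h0, hst⟩ := hE
  constructor
  · intro h
    have key : ∀ s : ℝ, r < s → s • u ∈ E := by
      intro s hs
      have hlt : extRadialFn E u < ENNReal.ofReal s :=
        h.trans_lt ((ENNReal.ofReal_lt_ofReal_iff_of_nonneg hr).2 hs)
      simp only [extRadialFn, iInf_lt_iff] at hlt
      obtain ⟨t, ⟨ht0, ht⟩, hts⟩ := hlt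
      have hts' := (ENNReal.ofReal_lt_ofReal_iff_of_nonneg ht0.le).1 hts
      have := hst (s / t) ((one_le_div ht0).2 hts'.le) _ ht
      rwa [smul_smul, div_mul_cancel₀ _ ht0.ne'] at this
    have hcont : Filter.Tendsto (fun s : ℝ => s • u) (nhdsWithin r (Ioi r)) (nhds (r • u)) :=
      ((continuous_id.smul continuous_const).tendsto r).mono_left nhdsWithin_le_nhds
    exact hcl.mem_of_tendsto hcont (by filter_upwards [self_mem_nhdsWithin] with s hs using key s hs)
  · intro h
    have hr0 : 0 < r := by
      refine lt_of_le_of_ne hr ?_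
      rintro rfl
      exact h0 (by simpa using h)
    exact iInf₂_le r ⟨hr0, h⟩

theorem measurable_extRadialFn {n : ℕ} {E : Set (EuclideanSpace ℝ (Fin n))}
    (hE : IsPseudoCone E) : Measurable (extRadialFn E) := by
  refine measurable_of_Iic fun t => ?_
  rcases eq_or_ne t ⊤ with rfl | ht
  · simp
  · have : extRadialFn E ⁻¹' Iic t = (fun u => t.toReal • u) ⁻¹' E := by
      ext u
      rw [mem_preimage, mem_Iic, mem_preimage, ← extRadialFn_le_iff hE u ENNReal.toReal_nonneg,
        ENNReal.ofReal_toReal ht]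
    rw [this]
    exact (hE.2.1.preimage (by fun_prop)).measurableSet

theorem smul_extRadialFn_le_iff {n : ℕ} {E : Set (EuclideanSpace ℝ (Fin n))}
    (hE : IsPseudoCone E) (u : EuclideanSpace ℝ (Fin n)) {l r : ℝ} (hl : 0 < l) (hr : 0 ≤ r) :
    ENNReal.ofReal l * extRadialFn E u ≤ ENNReal.ofReal r ↔ r • u ∈ l • E := by
  rw [mem_smul_set_iff_inv_smul_mem₀ hl.ne', smul_smul,
    ← extRadialFn_le_iff hE u (by positivity), mul_comm,
    ← ENNReal.le_div_iff_mul_le (by simp [hl]) (by simp), ← ENNReal.ofReal_div_of_pos hl,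
    div_eq_inv_mul]

/-- The radial function of a Minkowski sum is at most the sum of the radial functions. -/
theorem smul_mem_add {n : ℕ} {E₁ E₂ : Set (EuclideanSpace ℝ (Fin n))} (hE₁ : IsPseudoCone E₁)
    (hE₂ : IsPseudoCone E₂) (u : EuclideanSpace ℝ (Fin n)) {r : ℝ} (hr : 0 ≤ r)
    (h : extRadialFn E₁ u + extRadialFn E₂ u ≤ ENNReal.ofReal r) : r • u ∈ E₁ + E₂ := by
  have hne := ne_top_of_le_ne_top ENNReal.ofReal_ne_top h
  obtain ⟨h1, h2⟩ := ENNReal.add_ne_top.1 hne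
  have hsum : (extRadialFn E₁ u).toReal + (extRadialFn E₂ u).toReal ≤ r := by
    rw [← ENNReal.toReal_add h1 h2]
    exact ENNReal.toReal_le_of_le_ofReal hr h
  have p2 : 0 ≤ (extRadialFn E₂ u).toReal := ENNReal.toReal_nonneg
  have m1 := (extRadialFn_le_iff hE₁ u ENNReal.toReal_nonneg).1 (ENNReal.ofReal_toReal h1).ge
  have m2 := (extRadialFn_le_iff hE₂ u (r := r - (extRadialFn E₁ u).toReal) (by linarith)).1 (by
    rw [← ENNReal.ofReal_toReal h2]
    exact ENNReal.ofReal_le_ofReal (by linarith))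
  refine ⟨_, m1, _, m2, ?_⟩
  simp only
  rw [← add_smul, add_sub_cancel]

/-! ### The weighted co-volume as an integral over the sphere -/

/-- The density on the sphere for which the weighted co-volume becomes the `p`-th power integral of
the radial function. Only its values on the unit sphere matter; it vanishes outside `C`. -/
def sphereDensity {n : ℕ} (C : Set (EuclideanSpace ℝ (Fin n))) (Θ : EuclideanSpace ℝ (Fin n) → ℝ) :
    EuclideanSpace ℝ (Fin n) → ℝ≥0∞ :=
  (C \ {0}).indicator fun x => ENNReal.ofReal (Θ x)

/-- The measure `p⁻¹ Θ(u) du` on the part of the unit sphere inside `C`. -/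
def sphereMeasure {n : ℕ} (C : Set (EuclideanSpace ℝ (Fin n))) (Θ : EuclideanSpace ℝ (Fin n) → ℝ)
    (p : ℝ) : Measure (sphere (0 : EuclideanSpace ℝ (Fin n)) 1) :=
  (volume : Measure (EuclideanSpace ℝ (Fin n))).toSphere.withDensity
    fun u => ENNReal.ofReal p⁻¹ * sphereDensity C Θ u

theorem measurable_sphereDensity {n : ℕ} {C : Set (EuclideanSpace ℝ (Fin n))}
    {Θ : EuclideanSpace ℝ (Fin n) → ℝ} (hC : IsClosed C) (hΘ : ContinuousOn Θ (C \ {0})) :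
    Measurable (sphereDensity C Θ) := by
  have hm : MeasurableSet (C \ {0}) := hC.measurableSet.diff (measurableSet_singleton _)
  refine measurable_of_restrict_of_restrict_compl hm ?_ ?_
  · convert (continuousOn_iff_continuous_domRestrict.1 hΘ).measurable.ennreal_ofReal using 1
    funext x
    exact indicator_of_mem x.2 fun x => ENNReal.ofReal (Θ x)
  · convert measurable_const (a := (0 : ℝ≥0∞)) using 1
    funext x
    exact indicator_of_notMem x.2 fun x => ENNReal.ofReal (Θ x)

theorem smul_mem_cone_iff {n : ℕ} {C : Set (EuclideanSpace ℝ (Fin n))}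
    (hC : IsPointedClosedConvexCone C) {u : EuclideanSpace ℝ (Fin n)} {r : ℝ} (hr : 0 < r) :
    r • u ∈ C ↔ u ∈ C := by
  refine ⟨fun h => ?_, fun h => hC.2.2.2.1 r hr.le u h⟩
  simpa [smul_smul, hr.ne'] using hC.2.2.2.1 r⁻¹ (by positivity) _ h

theorem sphere_ne_zero {n : ℕ} (u : sphere (0 : EuclideanSpace ℝ (Fin n)) 1) :
    (u : EuclideanSpace ℝ (Fin n)) ≠ 0 := by
  intro h
  simpa [h] using norm_eq_of_mem_sphere u

/-- The weighted volume of a part `A` of `C`, star-shaped about the origin, in terms of its radial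
function `g`. Homogeneity of `Θ` makes the integrand `r ^ (p - 1) Θ(u)` on the ray through `u`. -/
theorem lintegral_eq_sphere {n : ℕ} (hn : 1 ≤ n) {C : Set (EuclideanSpace ℝ (Fin n))}
    (hC : IsPointedClosedConvexCone C) {q p : ℝ} (hpq : p = n - q) (hp : 1 ≤ p)
    {Θ : EuclideanSpace ℝ (Fin n) → ℝ} (hΘcont : ContinuousOn Θ (C \ {0}))
    (hΘhom : ∀ l : ℝ, 0 < l → ∀ x ∈ C \ {0}, Θ (l • x) = l ^ (-q) * Θ x)
    {A : Set (EuclideanSpace ℝ (Fin n))} (hA : MeasurableSet A) (hAC : A ⊆ C)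
    {g : sphere (0 : EuclideanSpace ℝ (Fin n)) 1 → ℝ≥0∞} (hg : Measurable g)
    (hgA : ∀ u : sphere (0 : EuclideanSpace ℝ (Fin n)) 1, (u : EuclideanSpace ℝ (Fin n)) ∈ C →
      ∀ r : ℝ, 0 < r → (r • (u : EuclideanSpace ℝ (Fin n)) ∈ A ↔ ENNReal.ofReal r < g u)) :
    ∫⁻ x in A, ENNReal.ofReal (Θ x) = ∫⁻ u, g u ^ p ∂(sphereMeasure C Θ p) := by
  have : Nonempty (Fin n) := ⟨⟨0, hn⟩⟩
  have hθ := measurable_sphereDensity hC.1 hΘcont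
  have hθs : Measurable fun u : sphere (0 : EuclideanSpace ℝ (Fin n)) 1 =>
      ENNReal.ofReal p⁻¹ * sphereDensity C Θ u := by fun_prop
  have h0 : ∀ᵐ x : EuclideanSpace ℝ (Fin n), x ≠ 0 := by
    simp [ae_iff]
  have e1 : ∫⁻ x in A, ENNReal.ofReal (Θ x) = ∫⁻ x, A.indicator (sphereDensity C Θ) x := by
    rw [lintegral_indicator hA]
    refine setLIntegral_congr_fun_ae hA ?_
    filter_upwards [h0] with x hx hxA
    rw [sphereDensity, indicator_of_mem (show x ∈ C \ {0} from ⟨hAC hxA, hx⟩)]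
  rw [e1, lintegral_polar hn (hθ.indicator hA), sphereMeasure,
    lintegral_withDensity_eq_lintegral_mul _ hθs (hg.pow_const p)]
  refine lintegral_congr fun u => ?_
  have hu0 := sphere_ne_zero u
  simp only [Pi.mul_apply]
  rw [mul_comm (ENNReal.ofReal p⁻¹), mul_assoc, ← lintegral_rpow_lt hp, ← lintegral_const_mul]
  swap
  · exact Measurable.indicator (by fun_prop) (measurableSet_lt (by fun_prop) (by fun_prop))
  refine setLIntegral_congr_fun measurableSet_Ioi fun r (hr : 0 < r) => ?_
  by_cases huC : (u : EuclideanSpace ℝ (Fin n)) ∈ C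
  · have hruC : r • (u : EuclideanSpace ℝ (Fin n)) ∈ C := (smul_mem_cone_iff hC hr).2 huC
    by_cases hlt : ENNReal.ofReal r < g u
    · have hrA := (hgA u huC r hr).2 hlt
      simp only [sphereDensity]
      rw [indicator_of_mem hrA, indicator_of_mem (show _ ∈ C \ {0} from ⟨hruC, smul_ne_zero hr.ne' hu0⟩),
        indicator_of_mem (show _ ∈ C \ {0} from ⟨huC, hu0⟩), indicator_of_mem (by exact hlt), hΘhom r hr _ ⟨huC, hu0⟩,
        ENNReal.ofReal_mul (by positivity), ← mul_assoc, ← ENNReal.ofReal_mul (by positivity),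
        mul_comm]
      congr 2
      rw [← Real.rpow_natCast, ← Real.rpow_add hr, Nat.cast_sub hn, hpq]
      congr 1
      push_cast
      ring
    · have hrA := mt (hgA u huC r hr).1 hlt
      rw [indicator_of_notMem hrA, indicator_of_notMem (by exact hlt)]
      simp
  · have hrA : r • (u : EuclideanSpace ℝ (Fin n)) ∉ A :=
      fun h => huC ((smul_mem_cone_iff hC hr).1 (hAC h))
    have hz : sphereDensity C Θ u = 0 := indicator_of_notMem (fun h => huC h.1) _
    rw [indicator_of_notMem hrA, hz]
    simp

theorem volume_eq_zero_of_rays {n : ℕ} (hn : 1 ≤ n) {A : Set (EuclideanSpace ℝ (Fin n))}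
    (hA : MeasurableSet A)
    (h : ∀ᵐ u : sphere (0 : EuclideanSpace ℝ (Fin n)) 1 ∂(volume : Measure (EuclideanSpace ℝ (Fin n))).toSphere,
      ∀ r : ℝ, 0 < r → r • (u : EuclideanSpace ℝ (Fin n)) ∉ A) : volume A = 0 := by
  rw [← lintegral_indicator_one hA, lintegral_polar hn (measurable_one.indicator hA),
    lintegral_congr_ae (g := fun _ => 0), lintegral_zero]
  filter_upwards [h] with u hu
  rw [setLIntegral_congr_fun (g := fun _ => 0) measurableSet_Ioi, lintegral_zero]
  intro r hr
  simp [indicator_of_notMem (hu r hr)]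

/-! ### Convexity -/

/-- The set `interior A \ B` is open, hence empty if it is null, and `A` is contained in the closure
of its interior. -/
theorem subset_of_volume_null {n : ℕ} {A B : Set (EuclideanSpace ℝ (Fin n))}
    (hA : Convex ℝ A) (hAi : (interior A).Nonempty) (hB : IsClosed B)
    (h : volume (interior A \ B) = 0) : A ⊆ B := by
  have ho : IsOpen (interior A \ B) := isOpen_interior.sdiff hB
  have hsub : interior A ⊆ B := sdiff_eq_empty.1 (ho.measure_eq_zero_iff volume |>.1 h)
  calc A ⊆ closure A := subset_closure
    _ = closure (interior A) := (hA.closure_interior_eq_closure_of_nonempty_interior hAi).symm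
    _ ⊆ B := closure_minimal hsub hB

/-- A `C`-pseudo-cone contains a translate of `C`. -/
theorem interior_nonempty {n : ℕ} {C E : Set (EuclideanSpace ℝ (Fin n))}
    (hC : IsPointedClosedConvexCone C) (hE : IsCPseudoCone C E) : (interior E).Nonempty := by
  obtain ⟨x, hx⟩ := hE.1.1
  obtain ⟨c, hc⟩ := hC.2.2.1
  have hsub : (fun y => x + y) '' interior C ⊆ E := by
    rintro _ ⟨y, hy, rfl⟩
    have hyC := interior_subset hy
    rw [← hE.2.2] at hyC
    exact hyC x hx
  exact ⟨x + c, interior_maximal hsub (isOpenMap_add_left x _ isOpen_interior) ⟨c, hc, rfl⟩⟩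

/-- If the co-volume vanished, `E` would contain `C` and in particular the origin. -/
theorem covolume_ne_zero {n : ℕ} (hn : 1 ≤ n) {C E : Set (EuclideanSpace ℝ (Fin n))}
    (hC : IsPointedClosedConvexCone C) (hE : IsPseudoCone E)
    {Θ : EuclideanSpace ℝ (Fin n) → ℝ} (hΘpos : ∀ x ∈ C \ {0}, 0 < Θ x)
    (hΘcont : ContinuousOn Θ (C \ {0})) :
    ∫⁻ x in C \ E, ENNReal.ofReal (Θ x) ≠ 0 := by
  have : Nonempty (Fin n) := ⟨⟨0, hn⟩⟩
  intro h
  have hm : MeasurableSet (C \ E) := hC.1.measurableSet.diff hE.2.1.measurableSet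
  have h0 : ∀ᵐ x : EuclideanSpace ℝ (Fin n), x ≠ 0 := by simp [ae_iff]
  have e : ∫⁻ x in C \ E, sphereDensity C Θ x = 0 := by
    rw [← h]
    refine setLIntegral_congr_fun_ae hm ?_
    filter_upwards [h0] with x hx hxA
    rw [sphereDensity, indicator_of_mem (show x ∈ C \ {0} from ⟨hxA.1, hx⟩)]
  rw [lintegral_eq_zero_iff (measurable_sphereDensity hC.1 hΘcont), Filter.EventuallyEq,
    ae_restrict_iff' hm] at e
  have hnull : volume (C \ E) = 0 := by
    refine measure_mono_null (fun x hx => ?_) (ae_iff.1 (e.and h0))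
    rintro ⟨h1, h2⟩
    have h3 := h1 hx
    rw [sphereDensity, indicator_of_mem (show x ∈ C \ {0} from ⟨hx.1, h2⟩)] at h3
    simp only [Pi.zero_apply, ENNReal.ofReal_eq_zero] at h3
    exact (hΘpos x ⟨hx.1, h2⟩).not_ge h3
  have hz : (0 : EuclideanSpace ℝ (Fin n)) ∈ C := by
    have : (0 : EuclideanSpace ℝ (Fin n)) ∈ C ∩ -C := by rw [hC.2.2.2.2]; rfl
    exact this.1
  exact hE.2.2.2.1 (subset_of_volume_null hC.2.1 hC.2.2.1 hE.2.1
    (measure_mono_null (sdiff_subset_sdiff_left interior_subset) hnull) hz)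

theorem volume_diff_null {n : ℕ} (hn : 1 ≤ n) {C A B : Set (EuclideanSpace ℝ (Fin n))}
    (hC : IsPointedClosedConvexCone C) (hAC : A ⊆ C) (hB : IsClosed B)
    (h : ∀ᵐ u : sphere (0 : EuclideanSpace ℝ (Fin n)) 1 ∂(volume : Measure (EuclideanSpace ℝ (Fin n))).toSphere,
      (u : EuclideanSpace ℝ (Fin n)) ∈ C → ∀ r : ℝ, 0 < r →
        r • (u : EuclideanSpace ℝ (Fin n)) ∈ A → r • (u : EuclideanSpace ℝ (Fin n)) ∈ B) :
    volume (interior A \ B) = 0 := by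
  refine volume_eq_zero_of_rays hn (isOpen_interior.measurableSet.diff hB.measurableSet) ?_
  filter_upwards [h] with u hu r hr hmem
  have hmA := interior_subset hmem.1
  exact hmem.2 (hu ((smul_mem_cone_iff hC hr).1 (hAC hmA)) r hr hmA)

/-! ### The weighted co-volumes of pseudo-cones, their dilates and their sums -/

theorem covolume_smul {n : ℕ} (hn : 1 ≤ n) {C E : Set (EuclideanSpace ℝ (Fin n))}
    (hC : IsPointedClosedConvexCone C) (hE : IsPseudoCone E) {q p : ℝ} (hpq : p = n - q)
    (hp : 1 ≤ p) {Θ : EuclideanSpace ℝ (Fin n) → ℝ} (hΘcont : ContinuousOn Θ (C \ {0}))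
    (hΘhom : ∀ l : ℝ, 0 < l → ∀ x ∈ C \ {0}, Θ (l • x) = l ^ (-q) * Θ x) {l : ℝ} (hl : 0 < l) :
    ∫⁻ x in C \ (l • E), ENNReal.ofReal (Θ x) =
      ∫⁻ u, (ENNReal.ofReal l * extRadialFn E u) ^ p ∂(sphereMeasure C Θ p) := by
  have hm := measurable_extRadialFn hE
  refine lintegral_eq_sphere hn hC hpq hp hΘcont hΘhom (hC.1.measurableSet.diff
    (hE.2.1.smul_of_ne_zero hl.ne').measurableSet) sdiff_subset (by fun_prop) fun u hu r hr => ?_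
  rw [← not_le, smul_extRadialFn_le_iff hE u hl hr.le]
  exact ⟨fun h => h.2, fun h => ⟨(smul_mem_cone_iff hC hr).2 hu, h⟩⟩

theorem covolume_eq {n : ℕ} (hn : 1 ≤ n) {C E : Set (EuclideanSpace ℝ (Fin n))}
    (hC : IsPointedClosedConvexCone C) (hE : IsPseudoCone E) {q p : ℝ} (hpq : p = n - q)
    (hp : 1 ≤ p) {Θ : EuclideanSpace ℝ (Fin n) → ℝ} (hΘcont : ContinuousOn Θ (C \ {0}))
    (hΘhom : ∀ l : ℝ, 0 < l → ∀ x ∈ C \ {0}, Θ (l • x) = l ^ (-q) * Θ x) :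
    ∫⁻ x in C \ E, ENNReal.ofReal (Θ x) =
      ∫⁻ u, extRadialFn E u ^ p ∂(sphereMeasure C Θ p) := by
  simpa using covolume_smul hn hC hE hpq hp hΘcont hΘhom one_pos

theorem covolume_smul_rpow {n : ℕ} (hn : 1 ≤ n) {C E : Set (EuclideanSpace ℝ (Fin n))}
    (hC : IsPointedClosedConvexCone C) (hE : IsPseudoCone E) {q p : ℝ} (hpq : p = n - q)
    (hp : 1 ≤ p) {Θ : EuclideanSpace ℝ (Fin n) → ℝ} (hΘcont : ContinuousOn Θ (C \ {0}))
    (hΘhom : ∀ l : ℝ, 0 < l → ∀ x ∈ C \ {0}, Θ (l • x) = l ^ (-q) * Θ x) {l : ℝ} (hl : 0 < l) :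
    (∫⁻ x in C \ (l • E), ENNReal.ofReal (Θ x)) ^ (1 / p) =
      ENNReal.ofReal l * (∫⁻ x in C \ E, ENNReal.ofReal (Θ x)) ^ (1 / p) := by
  have hp0 : 0 < p := by linarith
  have hm := measurable_extRadialFn hE
  rw [covolume_smul hn hC hE hpq hp hΘcont hΘhom hl, covolume_eq hn hC hE hpq hp hΘcont hΘhom]
  simp_rw [ENNReal.mul_rpow_of_nonneg _ _ hp0.le]
  rw [lintegral_const_mul _ (by fun_prop), ENNReal.mul_rpow_of_nonneg _ _ (by positivity),
    ← ENNReal.rpow_mul, mul_one_div_cancel hp0.ne', ENNReal.rpow_one]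

theorem covolume_add_le {n : ℕ} (hn : 1 ≤ n) {C E₁ E₂ : Set (EuclideanSpace ℝ (Fin n))}
    (hC : IsPointedClosedConvexCone C) (hE₁ : IsPseudoCone E₁) (hE₂ : IsPseudoCone E₂)
    {q p : ℝ} (hpq : p = n - q)
    (hp : 1 ≤ p) {Θ : EuclideanSpace ℝ (Fin n) → ℝ} (hΘcont : ContinuousOn Θ (C \ {0}))
    (hΘhom : ∀ l : ℝ, 0 < l → ∀ x ∈ C \ {0}, Θ (l • x) = l ^ (-q) * Θ x) :
    ∫⁻ x in C \ (E₁ + E₂), ENNReal.ofReal (Θ x) ≤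
      ∫⁻ u, (extRadialFn E₁ u + extRadialFn E₂ u) ^ p ∂(sphereMeasure C Θ p) := by
  have hm₁ := measurable_extRadialFn hE₁
  have hm₂ := measurable_extRadialFn hE₂
  -- The star-shaped part of `C` whose radial function is the sum of those of `E₁` and `E₂`.
  set D : Set (EuclideanSpace ℝ (Fin n)) := C ∩ {x | ENNReal.ofReal ‖x‖ <
    extRadialFn E₁ (‖x‖⁻¹ • x) + extRadialFn E₂ (‖x‖⁻¹ • x)} with hD
  have hDm : MeasurableSet D :=
    hC.1.measurableSet.inter (measurableSet_lt (by fun_prop) (by fun_prop))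
  have hsub : C \ (E₁ + E₂) ⊆ D := by
    rintro x ⟨hxC, hx⟩
    refine ⟨hxC, ?_⟩
    by_contra hnot
    have hmem := smul_mem_add hE₁ hE₂ (‖x‖⁻¹ • x) (norm_nonneg x) (not_lt.1 hnot)
    rcases eq_or_ne x 0 with rfl | hx0
    · exact hx (by simpa using hmem)
    · rw [smul_inv_smul₀ (norm_ne_zero_iff.2 hx0)] at hmem
      exact hx hmem
  calc ∫⁻ x in C \ (E₁ + E₂), ENNReal.ofReal (Θ x)
      ≤ ∫⁻ x in D, ENNReal.ofReal (Θ x) := lintegral_mono_set hsub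
    _ = _ := by
      refine lintegral_eq_sphere hn hC hpq hp hΘcont hΘhom hDm inter_subset_left
        (by fun_prop) fun u hu r hr => ?_
      have hnorm : ‖r • (u : EuclideanSpace ℝ (Fin n))‖ = r := by
        rw [norm_smul, norm_eq_of_mem_sphere u, mul_one, Real.norm_of_nonneg hr.le]
      have hiff : r • (u : EuclideanSpace ℝ (Fin n)) ∈ D ↔
          r • (u : EuclideanSpace ℝ (Fin n)) ∈ C ∧ ENNReal.ofReal r <
            extRadialFn E₁ u + extRadialFn E₂ u := by
        rw [hD, mem_inter_iff, mem_ofPred_eq, hnorm, inv_smul_smul₀ hr.ne']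
      rw [hiff, and_iff_right ((smul_mem_cone_iff hC hr).2 hu)]

/-- Closed convex sets with nonempty interior that agree up to a null set are equal, so almost
everywhere proportionality of the radial functions suffices. -/
theorem smul_eq_of_extRadialFn {n : ℕ} (hn : 1 ≤ n) {C E₁ E₂ : Set (EuclideanSpace ℝ (Fin n))}
    (hC : IsPointedClosedConvexCone C) (hE₁ : IsCPseudoCone C E₁) (hE₂ : IsCPseudoCone C E₂)
    {l : ℝ} (hl : 0 < l)
    (h : ∀ᵐ u : sphere (0 : EuclideanSpace ℝ (Fin n)) 1
      ∂(volume : Measure (EuclideanSpace ℝ (Fin n))).toSphere,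
      (u : EuclideanSpace ℝ (Fin n)) ∈ C →
        ENNReal.ofReal l * extRadialFn E₁ u = extRadialFn E₂ u) : E₂ = l • E₁ := by
  have hiff : ∀ᵐ u : sphere (0 : EuclideanSpace ℝ (Fin n)) 1
      ∂(volume : Measure (EuclideanSpace ℝ (Fin n))).toSphere,
      (u : EuclideanSpace ℝ (Fin n)) ∈ C → ∀ r : ℝ, 0 < r →
        (r • (u : EuclideanSpace ℝ (Fin n)) ∈ E₂ ↔
          r • (u : EuclideanSpace ℝ (Fin n)) ∈ l • E₁) := by
    filter_upwards [h] with u hu huC r hr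
    rw [← smul_extRadialFn_le_iff hE₁.1 u hl hr.le, hu huC, extRadialFn_le_iff hE₂.1 u hr.le]
  have hsub : l • E₁ ⊆ C := by
    rintro _ ⟨x, hx, rfl⟩
    exact hC.2.2.2.1 l hl.le x (hE₁.2.1 hx)
  have hcl : IsClosed (l • E₁) := hE₁.1.2.1.smul_of_ne_zero hl.ne'
  have hint : (interior (l • E₁)).Nonempty := by
    rw [interior_smul₀ hl.ne']
    exact (interior_nonempty hC hE₁).smul_set
  apply Subset.antisymm
  · refine subset_of_volume_null hE₂.1.2.2.1 (interior_nonempty hC hE₂) hcl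
      (volume_diff_null hn hC hE₂.2.1 hcl ?_)
    filter_upwards [hiff] with u hu huC r hr using (hu huC r hr).1
  · refine subset_of_volume_null (hE₁.1.2.2.1.smul l) hint hE₂.1.2.1
      (volume_diff_null hn hC hsub hE₂.1.2.1 ?_)
    filter_upwards [hiff] with u hu huC r hr using (hu huC r hr).2

theorem stmt19 {n : ℕ} (hn : 2 ≤ n) (C E₁ E₂ : Set (EuclideanSpace ℝ (Fin n)))
    (hC : IsPointedClosedConvexCone C)
    (hE₁ : IsCPseudoCone C E₁) (hE₂ : IsCPseudoCone C E₂)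
    (q : ℝ) (hq0 : 0 ≤ q) (hq1 : q ≤ (n : ℝ) - 1) (Θ : EuclideanSpace ℝ (Fin n) → ℝ)
    (hΘpos : ∀ x ∈ C \ {0}, 0 < Θ x)
    (hΘcont : ContinuousOn Θ (C \ {0}))
    (hΘhom : ∀ l : ℝ, 0 < l → ∀ x ∈ C \ {0}, Θ (l • x) = l ^ (-q) * Θ x)
    (hV₁ : ∫⁻ x in C \ E₁, ENNReal.ofReal (Θ x) ∂volume < ⊤)
    (hV₂ : ∫⁻ x in C \ E₂, ENNReal.ofReal (Θ x) ∂volume < ⊤) :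
    ((∫⁻ x in C \ (E₁ + E₂), ENNReal.ofReal (Θ x) ∂volume) ^ (1 / ((n : ℝ) - q))
      ≤ (∫⁻ x in C \ E₁, ENNReal.ofReal (Θ x) ∂volume) ^ (1 / ((n : ℝ) - q))
        + (∫⁻ x in C \ E₂, ENNReal.ofReal (Θ x) ∂volume) ^ (1 / ((n : ℝ) - q))) ∧
    (q < (n : ℝ) - 1 →
      (((∫⁻ x in C \ (E₁ + E₂), ENNReal.ofReal (Θ x) ∂volume) ^ (1 / ((n : ℝ) - q))
        = (∫⁻ x in C \ E₁, ENNReal.ofReal (Θ x) ∂volume) ^ (1 / ((n : ℝ) - q))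
          + (∫⁻ x in C \ E₂, ENNReal.ofReal (Θ x) ∂volume) ^ (1 / ((n : ℝ) - q)))
        ↔ ∃ l : ℝ, 0 < l ∧ E₂ = l • E₁)) := by
  have hn1 : 1 ≤ n := by omega
  obtain ⟨p, hpq⟩ : ∃ p : ℝ, p = n - q := ⟨_, rfl⟩
  rw [← hpq]
  have hp : 1 ≤ p := by linarith
  have hp0 : 0 < p := by linarith
  have hm₁ := measurable_extRadialFn hE₁.1
  have hm₂ := measurable_extRadialFn hE₂.1
  have hV₁' := covolume_eq hn1 hC hE₁.1 hpq hp hΘcont hΘhom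
  have hV₂' := covolume_eq hn1 hC hE₂.1 hpq hp hΘcont hΘhom
  have hle := covolume_add_le hn1 hC hE₁.1 hE₂.1 hpq hp hΘcont hΘhom
  refine ⟨?_, fun hq => ⟨fun heq => ?_, ?_⟩⟩
  · rw [hV₁', hV₂']
    exact (ENNReal.rpow_le_rpow hle (by positivity)).trans
      (ENNReal.lintegral_Lp_add_le (by fun_prop) (by fun_prop) hp)
  · -- `V = ofReal (a ^ p)` for the positive real `a = V ^ (1 / p)`.
    have root : ∀ V : ℝ≥0∞, V ≠ 0 → V < ⊤ → ∃ a : ℝ, 0 < a ∧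
        V = ENNReal.ofReal (a ^ p) ∧ V ^ (1 / p) = ENNReal.ofReal a := by
      intro V h0 hT
      have h0' : V ^ (1 / p) ≠ 0 := by simp [ENNReal.rpow_eq_zero_iff, h0, hT.ne]
      have hT' : V ^ (1 / p) ≠ ⊤ := ENNReal.rpow_ne_top_of_nonneg (by positivity) hT.ne
      refine ⟨(V ^ (1 / p)).toReal, ENNReal.toReal_pos h0' hT', ?_, (ENNReal.ofReal_toReal hT').symm⟩
      rw [← ENNReal.ofReal_rpow_of_nonneg ENNReal.toReal_nonneg hp0.le, ENNReal.ofReal_toReal hT',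
        ← ENNReal.rpow_mul, one_div_mul_cancel hp0.ne', ENNReal.rpow_one]
    obtain ⟨a, ha, hVa, hra⟩ := root _ (covolume_ne_zero hn1 hC hE₁.1 hΘpos hΘcont) hV₁
    obtain ⟨b, hb, hVb, hrb⟩ := root _ (covolume_ne_zero hn1 hC hE₂.1 hΘpos hΘcont) hV₂
    rw [hra, hrb, ← ENNReal.ofReal_add ha.le hb.le] at heq
    have hsum : ENNReal.ofReal ((a + b) ^ p) ≤
        ∫⁻ u : sphere (0 : EuclideanSpace ℝ (Fin n)) 1,
          (extRadialFn E₁ u + extRadialFn E₂ u) ^ p ∂(sphereMeasure C Θ p) := by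
      refine le_trans (le_of_eq ?_) hle
      rw [← ENNReal.ofReal_rpow_of_nonneg (by positivity) hp0.le, ← heq,
        ← ENNReal.rpow_mul, one_div_mul_cancel hp0.ne', ENNReal.rpow_one]
    have hae := minkowski_eq_case (by fun_prop) (by fun_prop) (by linarith) ha hb
      (hV₁'.symm.trans hVa) (hV₂'.symm.trans hVb) hsum
    have hθ := measurable_sphereDensity hC.1 hΘcont
    rw [sphereMeasure, ae_withDensity_iff (by fun_prop)] at hae
    refine ⟨b / a, by positivity,
      smul_eq_of_extRadialFn hn1 hC hE₁ hE₂ (by positivity) ?_⟩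
    filter_upwards [hae] with u hu huC
    have huC' : (u : EuclideanSpace ℝ (Fin n)) ∈ C \ {0} := ⟨huC, sphere_ne_zero u⟩
    have hne : ENNReal.ofReal p⁻¹ * sphereDensity C Θ u ≠ 0 := by
      rw [sphereDensity, indicator_of_mem huC']
      simp [hp0, hΘpos _ huC']
    have h := hu hne
    rw [← ENNReal.mul_right_inj (a := ENNReal.ofReal a) (by simpa using ha) (by simp), ← mul_assoc,
      ← ENNReal.ofReal_mul ha.le, mul_div_cancel₀ _ ha.ne', h]
  · rintro ⟨l, hl, rfl⟩
    have hadd : E₁ + l • E₁ = (1 + l) • E₁ := by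
      rw [hE₁.1.2.2.1.add_smul zero_le_one hl.le, one_smul]
    rw [hadd, covolume_smul_rpow hn1 hC hE₁.1 hpq hp hΘcont hΘhom hl,
      covolume_smul_rpow hn1 hC hE₁.1 hpq hp hΘcont hΘhom (by positivity),
      ENNReal.ofReal_add zero_le_one hl.le, ENNReal.ofReal_one, add_mul, one_mul]
end
end
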